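/- arXiv:1702.07062 — 3 statements merged into one kernel-verified Lean document; each statement's English description precedes it below -/
import Mathlib

section
/- Let α, β ∈ (0,5) with α + β > 5. Then there exists a constant C such that for all ν, ∫_E |μ|_*^{-α} |ν - μ|_*^{-β} dμ ≤ C |ν|_*^{-α-β+5}, where E = R × Z^3 with measure dσ × counting measure, and |μ|_* = 1 + |σ|^{1/2} + |k| for μ = (σ,k). -/
open MeasureTheory
open scoped ENNReal

noncomputable section

/-- The parabolic weight `|μ|_* = 1 + |σ|^{1/2} + |k|` on `E = ℝ × ℤ³`. -/
def pweight (μ : ℝ × (Fin 3 → ℤ)) : ℝ :=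
  1 + Real.sqrt |μ.1| + Real.sqrt (∑ i, ((μ.2 i : ℝ)) ^ 2)

/-- The measure on `E = ℝ × ℤ³`: Lebesgue measure times counting measure. -/
def Emeasure : Measure (ℝ × (Fin 3 → ℤ)) :=
  (volume : Measure ℝ).prod Measure.count

section GrowthWeight

variable {X : Type*} [MeasurableSpace X] {m : Measure X} {w : X → ℝ} {A d : ℝ}

/-- Integral of a negative power of a weight over a dyadic shell. -/
lemma setLIntegral_shell_le (hw : Measurable w)
    (hball : ∀ R : ℝ, 0 < R → m {x | w x ≤ R} ≤ ENNReal.ofReal (A * R ^ d))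
    {γ R : ℝ} (hγ : 0 < γ) (hR : 0 < R) :
    ∫⁻ x in {x | R / 2 ≤ w x ∧ w x ≤ R}, ENNReal.ofReal (w x ^ (-γ)) ∂m ≤
      ENNReal.ofReal (A * 2 ^ γ * R ^ (d - γ)) := by
  have hs : MeasurableSet {x | R / 2 ≤ w x ∧ w x ≤ R} :=
    (measurableSet_le measurable_const hw).inter (measurableSet_le hw measurable_const)
  calc ∫⁻ x in {x | R / 2 ≤ w x ∧ w x ≤ R}, ENNReal.ofReal (w x ^ (-γ)) ∂m
      ≤ ∫⁻ _ in {x | R / 2 ≤ w x ∧ w x ≤ R}, ENNReal.ofReal ((R / 2) ^ (-γ)) ∂m :=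
        setLIntegral_mono' hs fun x hx => ENNReal.ofReal_le_ofReal
          (Real.rpow_le_rpow_of_nonpos (by positivity) hx.1 (by linarith))
    _ = ENNReal.ofReal ((R / 2) ^ (-γ)) * m {x | R / 2 ≤ w x ∧ w x ≤ R} :=
        setLIntegral_const _ _
    _ ≤ ENNReal.ofReal ((R / 2) ^ (-γ)) * ENNReal.ofReal (A * R ^ d) := by
        gcongr
        exact (measure_mono fun x hx => hx.2).trans (hball R hR)
    _ = ENNReal.ofReal (A * 2 ^ γ * R ^ (d - γ)) := by
        rw [← ENNReal.ofReal_mul (by positivity)]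
        congr 1
        rw [Real.div_rpow hR.le (by norm_num), Real.rpow_neg (by norm_num : (0 : ℝ) ≤ 2),
          sub_eq_add_neg, Real.rpow_add hR]
        field_simp

/-- Integral of a negative power of a weight over a set covered by geometric shells. -/
lemma setLIntegral_geometric_shells_le (hw : Measurable w) (hA : 0 ≤ A)
    (hball : ∀ R : ℝ, 0 < R → m {x | w x ≤ R} ≤ ENNReal.ofReal (A * R ^ d))
    {γ R q : ℝ} (hγ : 0 < γ) (hR : 0 < R) (hq : 0 < q) (hqd : q ^ (d - γ) < 1) {s : Set X}
    (hs : ∀ x ∈ s, ∃ n : ℕ, R * q ^ n / 2 ≤ w x ∧ w x ≤ R * q ^ n) :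
    ∫⁻ x in s, ENNReal.ofReal (w x ^ (-γ)) ∂m ≤
      ENNReal.ofReal (A * 2 ^ γ * (1 - q ^ (d - γ))⁻¹ * R ^ (d - γ)) := by
  have hq0 : 0 ≤ q ^ (d - γ) := by positivity
  calc ∫⁻ x in s, ENNReal.ofReal (w x ^ (-γ)) ∂m
      ≤ ∫⁻ x in ⋃ n : ℕ, {x | R * q ^ n / 2 ≤ w x ∧ w x ≤ R * q ^ n},
          ENNReal.ofReal (w x ^ (-γ)) ∂m :=
        lintegral_mono_set fun x hx => Set.mem_iUnion.2 (hs x hx)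
    _ ≤ ∑' n : ℕ, ∫⁻ x in {x | R * q ^ n / 2 ≤ w x ∧ w x ≤ R * q ^ n},
          ENNReal.ofReal (w x ^ (-γ)) ∂m := lintegral_iUnion_le _ _
    _ ≤ ∑' n : ℕ, ENNReal.ofReal (A * 2 ^ γ * R ^ (d - γ) * (q ^ (d - γ)) ^ n) := by
        refine ENNReal.tsum_le_tsum fun n => ?_
        refine (setLIntegral_shell_le hw hball hγ (by positivity)).trans_eq ?_
        rw [Real.mul_rpow hR.le (by positivity), ← Real.rpow_natCast q n,
          ← Real.rpow_natCast _ n, ← Real.rpow_mul hq.le, ← Real.rpow_mul hq.le,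
          mul_comm (n : ℝ), mul_assoc _ (R ^ (d - γ))]
    _ = ENNReal.ofReal (A * 2 ^ γ * (1 - q ^ (d - γ))⁻¹ * R ^ (d - γ)) := by
        rw [← ENNReal.ofReal_tsum_of_nonneg (fun n => by positivity)
          ((summable_geometric_of_lt_one hq0 hqd).mul_left _), tsum_mul_left,
          tsum_geometric_of_lt_one hq0 hqd]
        congr 1
        ring

/-- Below the critical exponent, the integral over a ball is controlled by its radius. -/
lemma setLIntegral_ball_le (hw : Measurable w) (hpos : ∀ x, 0 < w x) (hA : 0 < A)
    (hball : ∀ R : ℝ, 0 < R → m {x | w x ≤ R} ≤ ENNReal.ofReal (A * R ^ d))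
    {γ : ℝ} (hγ : 0 < γ) (hγd : γ < d) {R : ℝ} (hR : 0 < R) :
    ∫⁻ x in {x | w x ≤ R}, ENNReal.ofReal (w x ^ (-γ)) ∂m ≤
      ENNReal.ofReal (A * 2 ^ γ * (1 - (1 / 2 : ℝ) ^ (d - γ))⁻¹ * R ^ (d - γ)) := by
  refine setLIntegral_geometric_shells_le hw hA.le hball hγ hR (by norm_num)
    (Real.rpow_lt_one (by norm_num) (by norm_num) (by linarith)) fun x hx => ?_
  obtain ⟨n, h₁, h₂⟩ := exists_nat_pow_near_of_lt_one (div_pos (hpos x) hR)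
    ((div_le_one hR).2 hx) (by norm_num : (0 : ℝ) < 1 / 2) (by norm_num)
  rw [lt_div_iff₀ hR, pow_succ] at h₁
  rw [div_le_iff₀ hR] at h₂
  exact ⟨n, by linarith, by linarith⟩

/-- Above the critical exponent, the integral off a ball is controlled by its radius. -/
lemma setLIntegral_compl_ball_le (hw : Measurable w) (hA : 0 < A)
    (hball : ∀ R : ℝ, 0 < R → m {x | w x ≤ R} ≤ ENNReal.ofReal (A * R ^ d))
    {γ : ℝ} (hγ : 0 < γ) (hγd : d < γ) {R : ℝ} (hR : 0 < R) :
    ∫⁻ x in {x | R / 2 ≤ w x}, ENNReal.ofReal (w x ^ (-γ)) ∂m ≤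
      ENNReal.ofReal (A * 2 ^ γ * (1 - (2 : ℝ) ^ (d - γ))⁻¹ * R ^ (d - γ)) := by
  refine setLIntegral_geometric_shells_le hw hA.le hball hγ hR (by norm_num)
    (Real.rpow_lt_one_of_one_lt_of_neg (by norm_num) (by linarith)) fun x hx => ?_
  have hx' : R / 2 ≤ w x := hx
  obtain ⟨n, h₁, h₂⟩ := exists_nat_pow_near ((one_le_div hR).2 (by linarith : R ≤ 2 * w x))
    (by norm_num : (1 : ℝ) < 2)
  rw [le_div_iff₀ hR] at h₁
  rw [div_lt_iff₀ hR, pow_succ] at h₂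
  exact ⟨n, by linarith, by linarith⟩

/-- The part of the convolution integral where the first weight is the smaller one. -/
lemma exists_setLIntegral_mul_le (m : Measure X) (hA : 0 < A) {α β : ℝ} (hα : 0 < α)
    (hαd : α < d) (hβ : 0 < β) (hαβ : d < α + β) :
    ∃ C : ℝ, 0 < C ∧ ∀ (w w' : X → ℝ) (N : ℝ), Measurable w → Measurable w' →
      (∀ x, 0 < w x) → 0 < N → (∀ x, N ≤ w x + w' x) →
      (∀ R : ℝ, 0 < R → m {x | w x ≤ R} ≤ ENNReal.ofReal (A * R ^ d)) →
      ∫⁻ x in {x | w x ≤ w' x}, ENNReal.ofReal (w x ^ (-α) * w' x ^ (-β)) ∂m ≤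
        ENNReal.ofReal (C * N ^ (-α - β + d)) := by
  set c₁ := A * 2 ^ α * (1 - (1 / 2 : ℝ) ^ (d - α))⁻¹
  set c₂ := A * 2 ^ (α + β) * (1 - (2 : ℝ) ^ (d - (α + β)))⁻¹
  have hc₁pos : 0 < c₁ := by
    have : (1 / 2 : ℝ) ^ (d - α) < 1 :=
      Real.rpow_lt_one (by norm_num) (by norm_num) (by linarith)
    have := inv_pos.2 (sub_pos.2 this)
    positivity
  have hc₂pos : 0 < c₂ := by
    have : (2 : ℝ) ^ (d - (α + β)) < 1 :=
      Real.rpow_lt_one_of_one_lt_of_neg (by norm_num) (by linarith)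
    have := inv_pos.2 (sub_pos.2 this)
    positivity
  refine ⟨2 ^ β * c₁ + c₂, by positivity, fun w w' N hw hw' hpos hN htri hball => ?_⟩
  have hle : MeasurableSet {x | w x ≤ w' x} := measurableSet_le hw hw'
  have hnear : ∫⁻ x in {x | w x ≤ w' x} ∩ {x | w x ≤ N},
      ENNReal.ofReal (w x ^ (-α) * w' x ^ (-β)) ∂m ≤
        ENNReal.ofReal (2 ^ β * c₁ * N ^ (-α - β + d)) := by
    calc _ ≤ ∫⁻ x in {x | w x ≤ w' x} ∩ {x | w x ≤ N},
          ENNReal.ofReal ((N / 2) ^ (-β)) * ENNReal.ofReal (w x ^ (-α)) ∂m := by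
          refine setLIntegral_mono' (hle.inter (measurableSet_le hw measurable_const))
            fun x hx => ?_
          have hx' : w x ≤ w' x := hx.1
          rw [← ENNReal.ofReal_mul (by positivity), mul_comm]
          have := (hpos x).le
          exact ENNReal.ofReal_le_ofReal (mul_le_mul_of_nonneg_right
            (Real.rpow_le_rpow_of_nonpos (by positivity) (by linarith [htri x]) (by linarith))
            (by positivity))
      _ ≤ ENNReal.ofReal ((N / 2) ^ (-β)) *
          ∫⁻ x in {x | w x ≤ N}, ENNReal.ofReal (w x ^ (-α)) ∂m := by
          rw [lintegral_const_mul' _ _ ENNReal.ofReal_ne_top]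
          gcongr
          exact Set.inter_subset_right
      _ ≤ ENNReal.ofReal ((N / 2) ^ (-β)) * ENNReal.ofReal (c₁ * N ^ (d - α)) := by
          gcongr
          exact setLIntegral_ball_le hw hpos hA hball hα hαd hN
      _ = ENNReal.ofReal (2 ^ β * c₁ * N ^ (-α - β + d)) := by
          rw [← ENNReal.ofReal_mul (by positivity)]
          congr 1
          rw [Real.div_rpow hN.le (by norm_num), Real.rpow_neg (by norm_num : (0 : ℝ) ≤ 2),
            show -α - β + d = -β + (d - α) by ring, Real.rpow_add hN]
          field_simp
  have hfar : ∫⁻ x in {x | w x ≤ w' x} ∩ {x | N / 2 ≤ w x},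
      ENNReal.ofReal (w x ^ (-α) * w' x ^ (-β)) ∂m ≤
        ENNReal.ofReal (c₂ * N ^ (-α - β + d)) := by
    calc _ ≤ ∫⁻ x in {x | w x ≤ w' x} ∩ {x | N / 2 ≤ w x},
          ENNReal.ofReal (w x ^ (-(α + β))) ∂m := by
          refine setLIntegral_mono' (hle.inter (measurableSet_le measurable_const hw))
            fun x hx => ENNReal.ofReal_le_ofReal ?_
          have := (hpos x).le
          rw [neg_add, Real.rpow_add (hpos x)]
          exact mul_le_mul_of_nonneg_left
            (Real.rpow_le_rpow_of_nonpos (hpos x) hx.1 (neg_nonpos.2 hβ.le)) (by positivity)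
      _ ≤ ∫⁻ x in {x | N / 2 ≤ w x}, ENNReal.ofReal (w x ^ (-(α + β))) ∂m :=
          lintegral_mono_set Set.inter_subset_right
      _ ≤ ENNReal.ofReal (c₂ * N ^ (d - (α + β))) :=
          setLIntegral_compl_ball_le hw hA hball (by linarith) hαβ hN
      _ = _ := by rw [show d - (α + β) = -α - β + d by ring]
  calc _ ≤ ∫⁻ x in ({x | w x ≤ w' x} ∩ {x | w x ≤ N}) ∪ ({x | w x ≤ w' x} ∩ {x | N / 2 ≤ w x}),
        ENNReal.ofReal (w x ^ (-α) * w' x ^ (-β)) ∂m := by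
        refine lintegral_mono_set fun x hx => ?_
        rcases le_total (w x) N with h | h
        · exact Or.inl ⟨hx, h⟩
        · exact Or.inr ⟨hx, show N / 2 ≤ w x by linarith⟩
    _ ≤ _ := (lintegral_union_le _ _ _).trans (add_le_add hnear hfar)
    _ = _ := by
        rw [← ENNReal.ofReal_add (by positivity) (by positivity), add_mul]

end GrowthWeight

lemma one_le_pweight (μ : ℝ × (Fin 3 → ℤ)) : 1 ≤ pweight μ := by
  unfold pweight
  linarith [Real.sqrt_nonneg |μ.1|, Real.sqrt_nonneg (∑ i, ((μ.2 i : ℝ)) ^ 2)]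

lemma pweight_neg (μ : ℝ × (Fin 3 → ℤ)) : pweight (-μ) = pweight μ := by
  simp [pweight]

lemma measurable_pweight : Measurable pweight := by
  unfold pweight
  fun_prop

lemma pweight_add_le (μ ν : ℝ × (Fin 3 → ℤ)) : pweight (μ + ν) ≤ pweight μ + pweight ν := by
  have h₁ : √|μ.1 + ν.1| ≤ √|μ.1| + √|ν.1| :=
    Real.sqrt_le_iff.2 ⟨by positivity, by
      nlinarith [abs_add_le μ.1 ν.1, Real.sq_sqrt (abs_nonneg μ.1), Real.sq_sqrt (abs_nonneg ν.1),
        mul_nonneg (Real.sqrt_nonneg |μ.1|) (Real.sqrt_nonneg |ν.1|)]⟩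
  have h₂ := norm_add_le (WithLp.toLp 2 fun i => (μ.2 i : ℝ)) (WithLp.toLp 2 fun i => (ν.2 i : ℝ))
  simp only [EuclideanSpace.norm_eq, PiLp.add_apply, Real.norm_eq_abs, sq_abs] at h₂
  simp only [pweight, Prod.fst_add, Prod.snd_add, Pi.add_apply, Int.cast_add]
  linarith

/-- Balls for the parabolic weight have volume of order `R ^ 5`. -/
lemma Emeasure_ball_le (ν : ℝ × (Fin 3 → ℤ)) {R : ℝ} (hR : 0 < R) :
    Emeasure {μ | pweight (ν - μ) ≤ R} ≤ ENNReal.ofReal (54 * R ^ (5 : ℝ)) := by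
  rcases lt_or_ge R 1 with hR1 | hR1
  · have : {μ | pweight (ν - μ) ≤ R} = ∅ :=
      Set.eq_empty_of_forall_notMem fun μ hμ =>
        absurd (show pweight (ν - μ) ≤ R from hμ) (by linarith [one_le_pweight (ν - μ)])
    simp [this]
  have hsub : {μ | pweight (ν - μ) ≤ R} ⊆ Set.Icc (ν.1 - R ^ 2) (ν.1 + R ^ 2) ×ˢ
      ((Finset.Icc (fun i => ν.2 i - ⌊R⌋) (fun i => ν.2 i + ⌊R⌋) : Finset (Fin 3 → ℤ)) :
        Set (Fin 3 → ℤ)) := by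
    intro μ hμ
    have hμ' : 1 + √|ν.1 - μ.1| + √(∑ i, (((ν.2 i - μ.2 i : ℤ) : ℝ)) ^ 2) ≤ R := hμ
    have h₁ : |ν.1 - μ.1| ≤ R ^ 2 := (Real.sqrt_le_left hR.le).1
      (by linarith [Real.sqrt_nonneg (∑ i, (((ν.2 i - μ.2 i : ℤ) : ℝ)) ^ 2)])
    have h₂ : ∀ i, |ν.2 i - μ.2 i| ≤ ⌊R⌋ := fun i => by
      rw [Int.le_floor, Int.cast_abs]
      have := Real.abs_le_sqrt (Finset.single_le_sum
        (f := fun i => (((ν.2 i - μ.2 i : ℤ) : ℝ)) ^ 2) (fun i _ => sq_nonneg _)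
        (Finset.mem_univ i))
      linarith [Real.sqrt_nonneg |ν.1 - μ.1|]
    rw [abs_le] at h₁
    simp only [Set.mem_prod, Set.mem_Icc, Finset.coe_Icc, Pi.le_def]
    exact ⟨⟨by linarith, by linarith⟩, fun i => by linarith [(abs_le.1 (h₂ i)).2],
      fun i => by linarith [(abs_le.1 (h₂ i)).1]⟩
  have hfl : 0 ≤ ⌊R⌋ := Int.floor_nonneg.2 hR.le
  have hcard : (((Finset.Icc (fun i => ν.2 i - ⌊R⌋) (fun i => ν.2 i + ⌊R⌋) :
      Finset (Fin 3 → ℤ)).card : ℕ) : ℝ) ≤ 27 * R ^ 3 := by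
    have h : ∀ i, ((ν.2 i + ⌊R⌋ + 1 - (ν.2 i - ⌊R⌋)).toNat : ℝ) = 2 * ⌊R⌋ + 1 := fun i => by
      have : ((ν.2 i + ⌊R⌋ + 1 - (ν.2 i - ⌊R⌋)).toNat : ℤ) = 2 * ⌊R⌋ + 1 := by omega
      exact_mod_cast this
    rw [Pi.card_Icc]
    simp only [Int.card_Icc, Nat.cast_prod, h, Finset.prod_const, Finset.card_univ,
      Fintype.card_fin]
    have : (0 : ℝ) ≤ ⌊R⌋ := by exact_mod_cast hfl
    calc (2 * (⌊R⌋ : ℝ) + 1) ^ 3 ≤ (3 * R) ^ 3 :=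
          pow_le_pow_left₀ (by positivity) (by linarith [Int.floor_le R]) 3
      _ = 27 * R ^ 3 := by ring
  calc Emeasure {μ | pweight (ν - μ) ≤ R} ≤ _ := measure_mono hsub
    _ = ENNReal.ofReal (2 * R ^ 2) * ENNReal.ofReal ((Finset.Icc (fun i => ν.2 i - ⌊R⌋)
          (fun i => ν.2 i + ⌊R⌋) : Finset (Fin 3 → ℤ)).card : ℝ) := by
        rw [Emeasure, Measure.prod_prod, Real.volume_Icc, Measure.count_apply_finset,
          ENNReal.ofReal_natCast]
        congr 2
        ring
    _ ≤ ENNReal.ofReal (2 * R ^ 2) * ENNReal.ofReal (27 * R ^ 3) := by gcongr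
    _ = ENNReal.ofReal (54 * R ^ (5 : ℝ)) := by
        rw [← ENNReal.ofReal_mul (by positivity)]
        congr 1
        norm_cast
        ring

/-- for `α, β ∈ (0,5)` with `α + β > 5` there is a constant `C` such that
`∫_E |μ|_*^{-α} |ν - μ|_*^{-β} dμ ≤ C |ν|_*^{-α-β+5}` for all `ν ∈ E`. -/
theorem statement1 :
    ∀ α β : ℝ, α ∈ Set.Ioo (0 : ℝ) 5 → β ∈ Set.Ioo (0 : ℝ) 5 → 5 < α + β →
      ∃ C : ℝ, 0 < C ∧ ∀ ν : ℝ × (Fin 3 → ℤ),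
        ∫⁻ μ, ENNReal.ofReal ((pweight μ) ^ (-α) * (pweight (ν - μ)) ^ (-β)) ∂Emeasure ≤
          ENNReal.ofReal (C * (pweight ν) ^ (-α - β + 5)) := by
  intro α β hα hβ hαβ
  obtain ⟨C₁, hC₁, h₁⟩ := exists_setLIntegral_mul_le Emeasure (by norm_num : (0 : ℝ) < 54)
    hα.1 hα.2 hβ.1 hαβ
  obtain ⟨C₂, hC₂, h₂⟩ := exists_setLIntegral_mul_le Emeasure (by norm_num : (0 : ℝ) < 54)
    hβ.1 hβ.2 hα.1 (by linarith : 5 < β + α)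
  refine ⟨C₁ + C₂, by positivity, fun ν => ?_⟩
  have hpos : ∀ μ, 0 < pweight μ := fun μ => zero_lt_one.trans_le (one_le_pweight μ)
  have hmeas : Measurable fun μ => pweight (ν - μ) :=
    measurable_pweight.comp (measurable_const.sub measurable_id)
  have htri : ∀ μ, pweight ν ≤ pweight μ + pweight (ν - μ) := fun μ => by
    simpa using pweight_add_le μ (ν - μ)
  have hball : ∀ R : ℝ, 0 < R →
      Emeasure {μ | pweight μ ≤ R} ≤ ENNReal.ofReal (54 * R ^ (5 : ℝ)) := fun R hR => by
    simpa [pweight_neg] using Emeasure_ball_le 0 hR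
  have hnear := h₁ pweight (fun μ => pweight (ν - μ)) (pweight ν) measurable_pweight hmeas hpos
    (hpos ν) htri hball
  have hfar := h₂ (fun μ => pweight (ν - μ)) pweight (pweight ν) hmeas measurable_pweight
    (fun μ => hpos _) (hpos ν) (fun μ => by linarith [htri μ])
    (fun R hR => Emeasure_ball_le ν hR)
  simp only [mul_comm (pweight (ν - _) ^ (-β)), show -β - α + 5 = -α - β + 5 by ring] at hfar
  have hN := (hpos ν).le
  calc _ = ∫⁻ μ in {μ | pweight μ ≤ pweight (ν - μ)} ∪ {μ | pweight (ν - μ) ≤ pweight μ},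
        ENNReal.ofReal ((pweight μ) ^ (-α) * (pweight (ν - μ)) ^ (-β)) ∂Emeasure := by
        rw [← setLIntegral_univ]
        congr 2
        exact (Set.eq_univ_of_forall fun μ => le_total (pweight μ) (pweight (ν - μ))).symm
    _ ≤ _ := (lintegral_union_le _ _ _).trans (add_le_add hnear hfar)
    _ = _ := by rw [← ENNReal.ofReal_add (by positivity) (by positivity), add_mul]
end
end

section
/- Let χ : R^3 → R be continuous with 0 ≤ χ ≤ 1, supp χ ⊂ B(0,1), χ = 1 in a neighborhood of 0 (or merely χ(0)=1 and χ continuous), and μ > 0. Define c^ε = Σ_{k_1,k_2∈Z^3} χ(εk_1)²χ(εk_2)² / (4(4π²μ|k_1|²+1)(4π²μ|k_2|²+1)(α_1 + iβ_1)), with α_1, β_1 as above. Then there exists a constant C > 0 such that C^{-1} log(1/ε) ≤ |c^ε| ≤ C log(1/ε) for all sufficiently small ε ∈ (0,1); moreover the same upper and lower bounds hold for Re c^ε. -/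
noncomputable section

/-- Euclidean norm on `ℝ³`. -/
def enorm3 (x : Fin 3 → ℝ) : ℝ := Real.sqrt (∑ i, (x i) ^ 2)

/-- Coercion of a lattice point `k ∈ ℤ³` to `ℝ³`. -/
def latR (k : Fin 3 → ℤ) : Fin 3 → ℝ := fun i => (k i : ℝ)

/-- `|k|²` for `k ∈ ℤ³`. -/
def nsq (k : Fin 3 → ℤ) : ℝ := ∑ i, ((k i : ℝ)) ^ 2

/-- `α₁ = 4π²μ(|k₁+k₂|² + |k₁|² + |k₂|²) + 3`. -/
def alpha1 (μ : ℝ) (k₁ k₂ : Fin 3 → ℤ) : ℝ :=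
  4 * Real.pi ^ 2 * μ * (nsq (k₁ + k₂) + nsq k₁ + nsq k₂) + 3

/-- `β₁ = 4π²(|k₁+k₂|² − |k₁|² − |k₂|²)`. -/
def beta1 (k₁ k₂ : Fin 3 → ℤ) : ℝ :=
  4 * Real.pi ^ 2 * (nsq (k₁ + k₂) - nsq k₁ - nsq k₂)

/-- The renormalization constant
`c^ε = Σ_{k₁,k₂} χ(εk₁)²χ(εk₂)² / (4(4π²μ|k₁|²+1)(4π²μ|k₂|²+1)(α₁+iβ₁))`. -/
def renormC (χ : (Fin 3 → ℝ) → ℝ) (μ ε : ℝ) : ℂ :=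
  ∑' p : (Fin 3 → ℤ) × (Fin 3 → ℤ),
    (((χ (ε • latR p.1)) ^ 2 * (χ (ε • latR p.2)) ^ 2 : ℝ) : ℂ) /
      (4 * ((4 * Real.pi ^ 2 * μ * nsq p.1 + 1 : ℝ) : ℂ) *
        ((4 * Real.pi ^ 2 * μ * nsq p.2 + 1 : ℝ) : ℂ) *
        ((alpha1 μ p.1 p.2 : ℂ) + (beta1 p.1 p.2 : ℂ) * Complex.I))

/-- The dyadic scale of a lattice point: the bit length of its sup norm. -/
def dyadicScale (k : Fin 3 → ℤ) : ℕ := Nat.size (Finset.univ.sup fun i => (k i).natAbs)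

lemma dyadicScale_le_iff (k : Fin 3 → ℤ) (J : ℕ) :
    dyadicScale k ≤ J ↔ ∀ i, |k i| < 2 ^ J := by
  rw [dyadicScale, Nat.size_le, Finset.sup_lt_iff (by positivity)]
  simp only [Finset.mem_univ, true_implies]
  refine forall_congr' fun i => ?_
  rw [Int.abs_eq_natAbs]
  exact_mod_cast Iff.rfl

/-- The lattice points of dyadic scale at most `J`. -/
def dyadicBall (J : ℕ) : Finset (Fin 3 → ℤ) :=
  Fintype.piFinset fun _ => Finset.Ioo (-2 ^ J : ℤ) (2 ^ J)

lemma mem_dyadicBall {k : Fin 3 → ℤ} {J : ℕ} : k ∈ dyadicBall J ↔ dyadicScale k ≤ J := by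
  simp [dyadicBall, dyadicScale_le_iff, abs_lt]

lemma card_dyadicBall_le (J : ℕ) : ((dyadicBall J).card : ℝ) ≤ 8 * 8 ^ J := by
  have h : (dyadicBall J).card ≤ (2 * 2 ^ J) ^ 3 := by
    rw [dyadicBall, Fintype.card_piFinset]
    simp only [Int.card_Ioo, Finset.prod_const, Finset.card_univ, Fintype.card_fin]
    gcongr
    have : ((2 ^ J : ℕ) : ℤ) = 2 ^ J := by push_cast; rfl
    omega
  calc ((dyadicBall J).card : ℝ) ≤ (2 * 2 ^ J) ^ 3 := by exact_mod_cast h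
    _ = 8 * 8 ^ J := by
      rw [mul_pow, ← pow_mul, mul_comm J 3, pow_mul]; norm_num

lemma nsq_nonneg (k : Fin 3 → ℤ) : 0 ≤ nsq k := Finset.sum_nonneg fun _ _ => sq_nonneg _

lemma four_pow_dyadicScale_le (k : Fin 3 → ℤ) :
    (4 : ℝ) ^ dyadicScale k ≤ 4 * (1 + nsq k) := by
  have h0 := nsq_nonneg k
  rcases h : dyadicScale k with _ | j
  · simp; linarith
  have : ¬ dyadicScale k ≤ j := by omega
  rw [dyadicScale_le_iff] at this
  push Not at this
  obtain ⟨i, hi⟩ := this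
  have hi' : (2 : ℝ) ^ j ≤ |(k i : ℝ)| := by exact_mod_cast hi
  have h1 : ((k i : ℝ)) ^ 2 ≤ nsq k :=
    Finset.single_le_sum (f := fun i => ((k i : ℝ)) ^ 2) (fun _ _ => sq_nonneg _)
      (Finset.mem_univ i)
  have h2 : ((2 : ℝ) ^ j) ^ 2 ≤ (k i : ℝ) ^ 2 := by
    rw [← sq_abs (k i : ℝ)]; gcongr
  have h3 : ((2 : ℝ) ^ j) ^ 2 = 4 ^ j := by rw [← pow_mul, mul_comm, pow_mul]; norm_num
  rw [pow_succ]
  linarith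

/-- Summing a function of the dyadic scale over a ball. -/
lemma sum_dyadicBall_le (f : ℕ → ℝ) (hf : ∀ j, 0 ≤ f j) (J : ℕ) :
    ∑ k ∈ dyadicBall J, f (dyadicScale k) ≤ ∑ j ∈ Finset.range (J + 1), 8 * 8 ^ j * f j := by
  rw [← Finset.sum_fiberwise_of_maps_to (t := Finset.range (J + 1)) (g := dyadicScale)
    (fun k hk => Finset.mem_range.2 (Nat.lt_succ_of_le (mem_dyadicBall.1 hk)))]
  refine Finset.sum_le_sum fun j _ => ?_
  calc ∑ k ∈ dyadicBall J with dyadicScale k = j, f (dyadicScale k)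
      = ∑ k ∈ dyadicBall J with dyadicScale k = j, f j :=
        Finset.sum_congr rfl fun k hk => by rw [(Finset.mem_filter.1 hk).2]
    _ ≤ ∑ k ∈ dyadicBall j, f j := by
        refine Finset.sum_le_sum_of_subset_of_nonneg (fun k hk => ?_) fun _ _ _ => hf j
        exact mem_dyadicBall.2 (Finset.mem_filter.1 hk).2.le
    _ ≤ 8 * 8 ^ j * f j := by
        rw [Finset.sum_const, nsmul_eq_mul]
        exact mul_le_mul_of_nonneg_right (card_dyadicBall_le j) (hf j)

lemma sum_range_two_pow_div_le (J : ℕ) :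
    ∑ i ∈ Finset.range (J + 1), (2 : ℝ) ^ i / 2 ^ J ≤ 2 := by
  rw [← Finset.sum_div, div_le_iff₀ (by positivity), geom_sum_eq (by norm_num), pow_succ]
  have : (0 : ℝ) < 2 ^ J := by positivity
  norm_num
  linarith

/-- The interaction of the dyadic scales `i` and `j` decays like `2 ^ (-|i - j|)`. -/
lemma sum_two_pow_mul_div_max_le (J : ℕ) :
    ∑ i ∈ Finset.range J, ∑ j ∈ Finset.range J,
      (2 : ℝ) ^ i * 2 ^ j / max (4 ^ i) (4 ^ j) ≤ 4 * J := by
  have key (i J : ℕ) (h : i ≤ J) :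
      (2 : ℝ) ^ i * 2 ^ J / max (4 ^ i) (4 ^ J) = 2 ^ i / 2 ^ J := by
    rw [max_eq_right (by gcongr; norm_num)]
    have : (4 : ℝ) ^ J = 2 ^ J * 2 ^ J := by rw [← mul_pow]; norm_num
    rw [this, mul_div_mul_right _ _ (by positivity)]
  have row (J : ℕ) :
      ∑ i ∈ Finset.range (J + 1), (2 : ℝ) ^ i * 2 ^ J / max (4 ^ i) (4 ^ J) ≤ 2 := by
    refine le_trans (Finset.sum_le_sum fun i hi => ?_) (sum_range_two_pow_div_le J)
    exact (key i J (Nat.le_of_lt_succ (Finset.mem_range.1 hi))).le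
  induction J with
  | zero => simp
  | succ J ih =>
    have h1 := row J
    have h2 : ∑ j ∈ Finset.range J, (2 : ℝ) ^ J * 2 ^ j / max (4 ^ J) (4 ^ j) ≤ 2 := by
      refine le_trans ?_ h1
      rw [Finset.sum_range_succ]
      refine le_trans (Finset.sum_le_sum (g := fun i =>
        (2 : ℝ) ^ i * 2 ^ J / max (4 ^ i) (4 ^ J)) fun i _ => ?_)
        (le_add_of_nonneg_right (by positivity))
      rw [mul_comm, max_comm]
    rw [Finset.sum_range_succ]
    simp only [Finset.sum_range_succ (n := J), Finset.sum_add_distrib] at h1 ⊢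
    push_cast
    linarith

/-- The summand of `renormC`. -/
def renormTerm (χ : (Fin 3 → ℝ) → ℝ) (μ ε : ℝ) (p : (Fin 3 → ℤ) × (Fin 3 → ℤ)) : ℂ :=
  (((χ (ε • latR p.1)) ^ 2 * (χ (ε • latR p.2)) ^ 2 : ℝ) : ℂ) /
    (4 * ((4 * Real.pi ^ 2 * μ * nsq p.1 + 1 : ℝ) : ℂ) *
      ((4 * Real.pi ^ 2 * μ * nsq p.2 + 1 : ℝ) : ℂ) *
      ((alpha1 μ p.1 p.2 : ℂ) + (beta1 p.1 p.2 : ℂ) * Complex.I))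

lemma alpha1_pos {μ : ℝ} (hμ : 0 < μ) (k₁ k₂ : Fin 3 → ℤ) : 0 < alpha1 μ k₁ k₂ := by
  have := nsq_nonneg (k₁ + k₂)
  have := nsq_nonneg k₁
  have := nsq_nonneg k₂
  unfold alpha1
  positivity

lemma norm_renormTerm_le {χ : (Fin 3 → ℝ) → ℝ} (hχ01 : ∀ x, χ x ∈ Set.Icc (0 : ℝ) 1)
    {μ : ℝ} (hμ : 0 < μ) (ε : ℝ) (p : (Fin 3 → ℤ) × (Fin 3 → ℤ)) :
    ‖renormTerm χ μ ε p‖ ≤ 16 / min (4 * Real.pi ^ 2 * μ) 1 ^ 3 /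
      (4 ^ dyadicScale p.1 * 4 ^ dyadicScale p.2 *
        max (4 ^ dyadicScale p.1) (4 ^ dyadicScale p.2)) := by
  obtain ⟨k₁, k₂⟩ := p
  have h1 := four_pow_dyadicScale_le k₁
  have h2 := four_pow_dyadicScale_le k₂
  have n1 := nsq_nonneg k₁
  have n2 := nsq_nonneg k₂
  have n12 := nsq_nonneg (k₁ + k₂)
  have hα' : ‖(alpha1 μ k₁ k₂ : ℂ) + (beta1 k₁ k₂ : ℂ) * Complex.I‖ ≥ alpha1 μ k₁ k₂ := by
    have := Complex.re_le_norm ((alpha1 μ k₁ k₂ : ℂ) + (beta1 k₁ k₂ : ℂ) * Complex.I)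
    simpa using this
  have hKpos : 0 < 4 * Real.pi ^ 2 * μ := by positivity
  have hαdef : alpha1 μ k₁ k₂ =
    4 * Real.pi ^ 2 * μ * (nsq (k₁ + k₂) + nsq k₁ + nsq k₂) + 3 := rfl
  simp only [renormTerm]
  generalize 4 * Real.pi ^ 2 * μ = K at *
  have hm0 : 0 < min K 1 := lt_min hKpos one_pos
  have hmK : min K 1 ≤ K := min_le_left _ _
  have hm1 : min K 1 ≤ 1 := min_le_right _ _
  generalize min K 1 = m at *
  have affine_le (x : ℝ) (hx : 0 ≤ x) : m * (1 + x) ≤ K * x + 1 := by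
    nlinarith [mul_le_mul_of_nonneg_right hmK hx]
  have a1 := affine_le _ n1
  have a2 := affine_le _ n2
  have b1 : m / 4 * 4 ^ dyadicScale k₁ ≤ K * nsq k₁ + 1 := by nlinarith
  have b2 : m / 4 * 4 ^ dyadicScale k₂ ≤ K * nsq k₂ + 1 := by nlinarith
  have b3 : m / 4 * max (4 ^ dyadicScale k₁) (4 ^ dyadicScale k₂) ≤
      alpha1 μ k₁ k₂ := by
    rw [hαdef]
    have := mul_nonneg hKpos.le n1
    have := mul_nonneg hKpos.le n2
    have := mul_nonneg hKpos.le n12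
    rcases max_choice ((4 : ℝ) ^ dyadicScale k₁) (4 ^ dyadicScale k₂) with h | h <;> rw [h] <;>
      linarith
  have hnum : χ (ε • latR k₁) ^ 2 * χ (ε • latR k₂) ^ 2 ≤ 1 :=
    mul_le_one₀ (pow_le_one₀ (hχ01 _).1 (hχ01 _).2) (sq_nonneg _)
      (pow_le_one₀ (hχ01 _).1 (hχ01 _).2)
  have hA : 0 < K * nsq k₁ + 1 := by positivity
  have hB : 0 < K * nsq k₂ + 1 := by positivity
  rw [norm_div, norm_mul, norm_mul, norm_mul, Complex.norm_real, Complex.norm_real,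
    Complex.norm_real, Real.norm_of_nonneg hA.le, Real.norm_of_nonneg hB.le,
    Real.norm_of_nonneg (by positivity)]
  calc _ ≤ 1 / (4 * (m / 4 * 4 ^ dyadicScale k₁) * (m / 4 * 4 ^ dyadicScale k₂) *
        (m / 4 * max (4 ^ dyadicScale k₁) (4 ^ dyadicScale k₂))) := by
        gcongr
        · norm_num
        · exact b3.trans hα'
    _ = _ := by
        field_simp
        norm_num

lemma abs_apply_lt_of_ne_zero {χ : (Fin 3 → ℝ) → ℝ}
    (hχsupp : Function.support χ ⊆ {x | enorm3 x < 1}) {ε : ℝ} (hε : 0 < ε) {k : Fin 3 → ℤ}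
    (hk : χ (ε • latR k) ≠ 0) (i : Fin 3) : |(k i : ℝ)| < 1 / ε := by
  have h : enorm3 (ε • latR k) < 1 := hχsupp hk
  have h1 : |ε * (k i : ℝ)| ≤ enorm3 (ε • latR k) := by
    refine Real.abs_le_sqrt ?_
    exact Finset.single_le_sum (f := fun i => ((ε • latR k) i) ^ 2) (fun _ _ => sq_nonneg _)
      (Finset.mem_univ i)
  rw [abs_mul, abs_of_pos hε] at h1
  rw [lt_div_iff₀ hε]
  linarith

/-- The summand of `renormC` is supported in a product of dyadic balls. -/
lemma renormTerm_eq_zero {χ : (Fin 3 → ℝ) → ℝ}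
    (hχsupp : Function.support χ ⊆ {x | enorm3 x < 1}) (μ : ℝ) {ε : ℝ} (hε : 0 < ε) {J : ℕ}
    (hJ : 1 / ε ≤ 2 ^ J) {p : (Fin 3 → ℤ) × (Fin 3 → ℤ)}
    (hp : p ∉ dyadicBall J ×ˢ dyadicBall J) : renormTerm χ μ ε p = 0 := by
  have mem (k : Fin 3 → ℤ) (hk : χ (ε • latR k) ≠ 0) : k ∈ dyadicBall J := by
    rw [mem_dyadicBall, dyadicScale_le_iff]
    intro i
    have := (abs_apply_lt_of_ne_zero hχsupp hε hk i).trans_le hJ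
    exact_mod_cast this
  by_contra h
  refine hp (Finset.mem_product.2 ⟨mem _ fun h0 => h ?_, mem _ fun h0 => h ?_⟩) <;>
    simp [renormTerm, h0]

lemma norm_renormC_le {χ : (Fin 3 → ℝ) → ℝ} (hχ01 : ∀ x, χ x ∈ Set.Icc (0 : ℝ) 1)
    (hχsupp : Function.support χ ⊆ {x | enorm3 x < 1}) {μ : ℝ} (hμ : 0 < μ) {ε : ℝ} (hε : 0 < ε)
    {J : ℕ} (hJ : 1 / ε ≤ 2 ^ J) :
    ‖renormC χ μ ε‖ ≤ 4096 / min (4 * Real.pi ^ 2 * μ) 1 ^ 3 * (J + 1) := by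
  have hC : 0 ≤ 16 / min (4 * Real.pi ^ 2 * μ) 1 ^ 3 := by positivity
  have e : 4096 / min (4 * Real.pi ^ 2 * μ) 1 ^ 3 =
    256 * (16 / min (4 * Real.pi ^ 2 * μ) 1 ^ 3) := by ring
  have hterm := norm_renormTerm_le hχ01 hμ ε
  rw [e]
  generalize 16 / min (4 * Real.pi ^ 2 * μ) 1 ^ 3 = c at *
  have hsum : renormC χ μ ε = ∑ p ∈ dyadicBall J ×ˢ dyadicBall J, renormTerm χ μ ε p :=
    tsum_eq_sum fun p hp => renormTerm_eq_zero hχsupp μ hε hJ hp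
  rw [hsum]
  calc _ ≤ ∑ p ∈ dyadicBall J ×ˢ dyadicBall J, c / (4 ^ dyadicScale p.1 * 4 ^ dyadicScale p.2 *
        max (4 ^ dyadicScale p.1) (4 ^ dyadicScale p.2)) :=
        norm_sum_le_of_le _ fun p _ => hterm p
    _ = ∑ k ∈ dyadicBall J, ∑ l ∈ dyadicBall J, c / (4 ^ dyadicScale k * 4 ^ dyadicScale l *
        max (4 ^ dyadicScale k) (4 ^ dyadicScale l)) := Finset.sum_product _ _ _
    _ ≤ ∑ k ∈ dyadicBall J, ∑ j ∈ Finset.range (J + 1), 8 * 8 ^ j *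
        (c / (4 ^ dyadicScale k * 4 ^ j * max (4 ^ dyadicScale k) (4 ^ j))) :=
        Finset.sum_le_sum fun k _ => sum_dyadicBall_le
          (fun j => c / (4 ^ dyadicScale k * 4 ^ j * max (4 ^ dyadicScale k) (4 ^ j)))
          (fun j => by positivity) J
    _ ≤ ∑ i ∈ Finset.range (J + 1), 8 * 8 ^ i * ∑ j ∈ Finset.range (J + 1), 8 * 8 ^ j *
        (c / (4 ^ i * 4 ^ j * max (4 ^ i) (4 ^ j))) :=
        sum_dyadicBall_le (fun i => ∑ j ∈ Finset.range (J + 1), 8 * 8 ^ j *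
          (c / (4 ^ i * 4 ^ j * max (4 ^ i) (4 ^ j)))) (fun i => by positivity) J
    _ = 64 * c * ∑ i ∈ Finset.range (J + 1), ∑ j ∈ Finset.range (J + 1),
        (2 : ℝ) ^ i * 2 ^ j / max (4 ^ i) (4 ^ j) := by
        simp only [Finset.mul_sum]
        refine Finset.sum_congr rfl fun i _ => Finset.sum_congr rfl fun j _ => ?_
        have h8 (n : ℕ) : (8 : ℝ) ^ n = 2 ^ n * 4 ^ n := by rw [← mul_pow]; norm_num
        rw [h8, h8]
        field_simp
        ring
    _ ≤ 64 * c * (4 * (J + 1 : ℕ)) := by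
        gcongr
        exact sum_two_pow_mul_div_max_le (J + 1)
    _ = _ := by push_cast; ring

lemma re_renormTerm (χ : (Fin 3 → ℝ) → ℝ) (μ ε : ℝ) (p : (Fin 3 → ℤ) × (Fin 3 → ℤ)) :
    (renormTerm χ μ ε p).re = χ (ε • latR p.1) ^ 2 * χ (ε • latR p.2) ^ 2 /
      (4 * (4 * Real.pi ^ 2 * μ * nsq p.1 + 1) * (4 * Real.pi ^ 2 * μ * nsq p.2 + 1)) *
      (alpha1 μ p.1 p.2 / (alpha1 μ p.1 p.2 ^ 2 + beta1 p.1 p.2 ^ 2)) := by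
  have h : renormTerm χ μ ε p = ((χ (ε • latR p.1) ^ 2 * χ (ε • latR p.2) ^ 2 /
      (4 * (4 * Real.pi ^ 2 * μ * nsq p.1 + 1) * (4 * Real.pi ^ 2 * μ * nsq p.2 + 1)) : ℝ) : ℂ) *
      ((alpha1 μ p.1 p.2 : ℂ) + (beta1 p.1 p.2 : ℂ) * Complex.I)⁻¹ := by
    rw [renormTerm, div_mul_eq_div_div, div_eq_mul_inv _ ((alpha1 μ p.1 p.2 : ℂ) + _)]
    push_cast
    rfl
  rw [h, Complex.re_ofReal_mul, Complex.inv_re, Complex.normSq_add_mul_I]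
  simp

lemma re_renormTerm_nonneg (χ : (Fin 3 → ℝ) → ℝ) {μ : ℝ} (hμ : 0 < μ) (ε : ℝ)
    (p : (Fin 3 → ℤ) × (Fin 3 → ℤ)) : 0 ≤ (renormTerm χ μ ε p).re := by
  have := (alpha1_pos hμ p.1 p.2).le
  have := nsq_nonneg p.1
  have := nsq_nonneg p.2
  rw [re_renormTerm]
  positivity

/-- The lattice cube `[2 ^ j, 2 ^ (j + 1))³`. -/
def dyadicCube (j : ℕ) : Finset (Fin 3 → ℤ) :=
  Fintype.piFinset fun _ => Finset.Ico (2 ^ j : ℤ) (2 ^ (j + 1))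

lemma mem_dyadicCube {k : Fin 3 → ℤ} {j : ℕ} :
    k ∈ dyadicCube j ↔ ∀ i, (2 ^ j : ℝ) ≤ k i ∧ (k i : ℝ) < 2 ^ (j + 1) := by
  simp only [dyadicCube, Fintype.mem_piFinset, Finset.mem_Ico]
  exact_mod_cast Iff.rfl

lemma card_dyadicCube (j : ℕ) : ((dyadicCube j).card : ℝ) = (2 ^ j) ^ 3 := by
  have h : (dyadicCube j).card = (2 ^ j) ^ 3 := by
    rw [dyadicCube, Fintype.card_piFinset]
    simp only [Int.card_Ico, Finset.prod_const, Finset.card_univ, Fintype.card_fin]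
    have h2 : ((2 ^ j : ℕ) : ℤ) = 2 ^ j := by push_cast; rfl
    congr 1
    rw [pow_succ', two_mul, add_sub_cancel_right, ← h2, Int.toNat_natCast]
  exact_mod_cast h

lemma disjoint_dyadicCube {i j : ℕ} (hij : i ≠ j) : Disjoint (dyadicCube i) (dyadicCube j) := by
  rw [Finset.disjoint_left]
  intro k hi hj
  rw [mem_dyadicCube] at hi hj
  have h1 := (pow_lt_pow_iff_right₀ (one_lt_two (α := ℝ))).1 ((hi 0).1.trans_lt (hj 0).2)
  have h2 := (pow_lt_pow_iff_right₀ (one_lt_two (α := ℝ))).1 ((hj 0).1.trans_lt (hi 0).2)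
  omega

lemma nsq_bounds_of_mem_dyadicCube {k : Fin 3 → ℤ} {j : ℕ} (hk : k ∈ dyadicCube j) :
    3 * (2 ^ j) ^ 2 ≤ nsq k ∧ nsq k ≤ 12 * (2 ^ j) ^ 2 := by
  rw [mem_dyadicCube] at hk
  have hpos : (0 : ℝ) < 2 ^ j := by positivity
  have h (i : Fin 3) : (2 ^ j : ℝ) ^ 2 ≤ (k i : ℝ) ^ 2 ∧ (k i : ℝ) ^ 2 ≤ 4 * (2 ^ j) ^ 2 := by
    obtain ⟨h1, h2⟩ := hk i
    rw [pow_succ] at h2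
    constructor <;> nlinarith
  have h0 := h 0
  have h1 := h 1
  have h2 := h 2
  rw [nsq, Fin.sum_univ_three]
  constructor <;> linarith

lemma abs_nsq_add_sub_le (k l : Fin 3 → ℤ) : |nsq (k + l) - nsq k - nsq l| ≤ nsq k + nsq l := by
  simp only [nsq, Fin.sum_univ_three, Pi.add_apply, Int.cast_add]
  rw [abs_le]
  constructor <;>
    nlinarith [sq_nonneg ((k 0 : ℝ) + l 0), sq_nonneg ((k 1 : ℝ) + l 1),
      sq_nonneg ((k 2 : ℝ) + l 2), sq_nonneg ((k 0 : ℝ) - l 0), sq_nonneg ((k 1 : ℝ) - l 1),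
      sq_nonneg ((k 2 : ℝ) - l 2)]

/-- The constant in the lower bound for the summand on a dyadic cube. -/
def lowerConst (μ : ℝ) : ℝ :=
  1 / 16 / (4 * (12 * (4 * Real.pi ^ 2 * μ) + 1) ^ 2) * (6 * (4 * Real.pi ^ 2 * μ) /
    ((72 * (4 * Real.pi ^ 2 * μ) + 3) ^ 2 + (4 * Real.pi ^ 2 * 24) ^ 2))

lemma lowerConst_pos {μ : ℝ} (hμ : 0 < μ) : 0 < lowerConst μ := by
  unfold lowerConst; positivity

lemma le_re_renormTerm {χ : (Fin 3 → ℝ) → ℝ} {μ : ℝ} (hμ : 0 < μ) {ε : ℝ} {j : ℕ}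
    {k l : Fin 3 → ℤ} (hk : k ∈ dyadicCube j) (hl : l ∈ dyadicCube j)
    (hχk : 1 / 2 ≤ χ (ε • latR k)) (hχl : 1 / 2 ≤ χ (ε • latR l)) :
    lowerConst μ / (2 ^ j) ^ 6 ≤ (renormTerm χ μ ε (k, l)).re := by
  obtain ⟨k1, k2⟩ := nsq_bounds_of_mem_dyadicCube hk
  obtain ⟨l1, l2⟩ := nsq_bounds_of_mem_dyadicCube hl
  have hkl := abs_nsq_add_sub_le k l
  have hn := nsq_nonneg (k + l)
  have hX : (1 : ℝ) ≤ (2 ^ j) ^ 2 := one_le_pow₀ (one_le_pow₀ one_le_two)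
  have hβ : beta1 k l ^ 2 ≤ (4 * Real.pi ^ 2 * 24 * (2 ^ j) ^ 2) ^ 2 := by
    rw [sq_le_sq, beta1, abs_mul, abs_of_nonneg (by positivity : 0 ≤ 4 * Real.pi ^ 2),
      abs_of_nonneg (by positivity : 0 ≤ 4 * Real.pi ^ 2 * 24 * (2 ^ j : ℝ) ^ 2), mul_assoc _ 24]
    gcongr
    linarith
  have hαpos := alpha1_pos hμ k l
  have hK : 0 < 4 * Real.pi ^ 2 * μ := by positivity
  have hα : alpha1 μ k l =
    4 * Real.pi ^ 2 * μ * (nsq (k + l) + nsq k + nsq l) + 3 := rfl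
  rw [re_renormTerm, lowerConst]
  simp only
  have e6 : ((2 : ℝ) ^ j) ^ 6 = ((2 ^ j) ^ 2) ^ 3 := pow_mul _ 2 3
  rw [e6]
  generalize 4 * Real.pi ^ 2 * μ = K at *
  generalize 4 * Real.pi ^ 2 * 24 = B at *
  generalize ((2 : ℝ) ^ j) ^ 2 = X at *
  have hX0 : 0 < X := by linarith
  have hα1 : 6 * K * X ≤ alpha1 μ k l := by rw [hα]; nlinarith
  have hα2 : alpha1 μ k l ≤ (72 * K + 3) * X := by
    have := (abs_le.1 hkl).2
    have : K * (nsq (k + l) + nsq k + nsq l) ≤ K * (72 * X) := by gcongr; linarith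
    rw [hα]; nlinarith
  have hA (x : ℝ) (hx : x ≤ 12 * X) : K * x + 1 ≤ (12 * K + 1) * X := by nlinarith
  have hk0 := nsq_nonneg k
  have hl0 := nsq_nonneg l
  calc _ = (1 / 2) ^ 2 * (1 / 2) ^ 2 / (4 * ((12 * K + 1) * X) * ((12 * K + 1) * X)) *
        (6 * K * X / (((72 * K + 3) * X) ^ 2 + (B * X) ^ 2)) := by
        field_simp
        norm_num
    _ ≤ _ := by
        have := hA _ k2
        have := hA _ l2
        gcongr

lemma le_re_renormC {χ : (Fin 3 → ℝ) → ℝ}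
    (hχsupp : Function.support χ ⊆ {x | enorm3 x < 1}) {μ : ℝ} (hμ : 0 < μ) {ε : ℝ} (hε : 0 < ε)
    {δ : ℝ} (hδ : ∀ x, ‖x‖ ≤ δ → 1 / 2 ≤ χ x) {J : ℕ} (hJ : 2 ^ J * ε ≤ δ) :
    lowerConst μ * J ≤ (renormC χ μ ε).re := by
  obtain ⟨N, hN⟩ := pow_unbounded_of_one_lt (1 / ε) (one_lt_two (α := ℝ))
  have hs : Summable (renormTerm χ μ ε) :=
    summable_of_ne_finset_zero fun p hp => renormTerm_eq_zero hχsupp μ hε hN.le hp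
  have hre : (renormC χ μ ε).re = ∑' p, (renormTerm χ μ ε p).re := Complex.re_tsum hs
  have hsre : Summable fun p => (renormTerm χ μ ε p).re := (Complex.hasSum_re hs.hasSum).summable
  have hχ (j : ℕ) (hj : j < J) (k : Fin 3 → ℤ) (hk : k ∈ dyadicCube j) :
      1 / 2 ≤ χ (ε • latR k) := by
    refine hδ _ ?_
    have h2J : (0 : ℝ) < 2 ^ J := by positivity
    rw [pi_norm_le_iff_of_nonneg (by nlinarith)]
    intro i
    obtain ⟨h1, h2⟩ := mem_dyadicCube.1 hk i
    have h3 : (2 : ℝ) ^ (j + 1) ≤ 2 ^ J := pow_le_pow_right₀ one_le_two hj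
    have h0 : (0 : ℝ) ≤ k i := le_trans (by positivity) h1
    simp only [Pi.smul_apply, latR, smul_eq_mul]
    rw [Real.norm_of_nonneg (by positivity)]
    nlinarith
  rw [hre]
  calc lowerConst μ * J
      = ∑ j ∈ Finset.range J, ∑ p ∈ dyadicCube j ×ˢ dyadicCube j,
          lowerConst μ / (2 ^ j) ^ 6 := by
        simp only [Finset.sum_const, Finset.card_product, nsmul_eq_mul, Nat.cast_mul,
          card_dyadicCube]
        rw [Finset.sum_congr rfl (g := fun _ => lowerConst μ), Finset.sum_const,
          Finset.card_range, nsmul_eq_mul, mul_comm]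
        intro j _
        field_simp
    _ ≤ ∑ j ∈ Finset.range J, ∑ p ∈ dyadicCube j ×ˢ dyadicCube j,
          (renormTerm χ μ ε p).re := by
        refine Finset.sum_le_sum fun j hj => Finset.sum_le_sum fun p hp => ?_
        obtain ⟨h1, h2⟩ := Finset.mem_product.1 hp
        have hj' := Finset.mem_range.1 hj
        exact le_re_renormTerm hμ h1 h2 (hχ j hj' _ h1) (hχ j hj' _ h2)
    _ = ∑ p ∈ (Finset.range J).biUnion fun j => dyadicCube j ×ˢ dyadicCube j,
          (renormTerm χ μ ε p).re := by
        refine (Finset.sum_biUnion fun i _ j _ hij => ?_).symm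
        exact Finset.disjoint_product.2 (Or.inl (disjoint_dyadicCube hij))
    _ ≤ ∑' p, (renormTerm χ μ ε p).re :=
        hsre.sum_le_tsum _ fun p _ => re_renormTerm_nonneg χ hμ ε p

lemma exists_dyadic_upper {ε : ℝ} (hε : 0 < ε) (hε' : ε ≤ 1 / 4) :
    ∃ J : ℕ, 1 / ε ≤ 2 ^ J ∧ (J + 1 : ℝ) ≤ 4 * Real.log (1 / ε) := by
  have h4 : 4 ≤ 1 / ε := by rw [le_div_iff₀ hε]; linarith
  have hlog2 := Real.log_two_gt_d9
  have hlog : 2 * Real.log 2 ≤ Real.log (1 / ε) := by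
    have := Real.log_le_log (by norm_num) h4
    rwa [show (4 : ℝ) = 2 ^ 2 by norm_num, Real.log_pow] at this
  refine ⟨⌈Real.logb 2 (1 / ε)⌉₊, ?_, ?_⟩
  · have := Nat.le_ceil (Real.logb 2 (1 / ε))
    rw [Real.logb_le_iff_le_rpow one_lt_two (by positivity), Real.rpow_natCast] at this
    exact this
  · have h1 : 0 ≤ Real.logb 2 (1 / ε) := Real.logb_nonneg one_lt_two (by linarith)
    have h2 := Nat.ceil_lt_add_one h1
    have h3 : Real.logb 2 (1 / ε) ≤ 2 * Real.log (1 / ε) := by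
      rw [Real.logb, div_le_iff₀ (by linarith)]
      nlinarith
    linarith

lemma exists_dyadic_lower {δ ε : ℝ} (hδ : 0 < δ) (hδ1 : δ ≤ 1) (hε : 0 < ε)
    (hεδ : ε ≤ (δ / 2) ^ 2) :
    ∃ J : ℕ, 2 ^ J * ε ≤ δ ∧ Real.log (1 / ε) ≤ 2 * J := by
  have hlog2 := Real.log_two_gt_d9
  have hlog2' := Real.log_two_lt_d9
  have hlog : Real.log ε ≤ 2 * (Real.log δ - Real.log 2) := by
    have := Real.log_le_log hε hεδ
    rwa [Real.log_pow, Real.log_div hδ.ne' two_ne_zero, Nat.cast_ofNat] at this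
  have hδ' : Real.log δ ≤ 0 := Real.log_nonpos hδ.le hδ1
  have hb : Real.logb 2 (δ / ε) * Real.log 2 = Real.log δ - Real.log ε := by
    rw [Real.logb, div_mul_cancel₀ _ (by linarith), Real.log_div hδ.ne' hε.ne']
  refine ⟨⌊Real.logb 2 (δ / ε)⌋₊, ?_, ?_⟩
  · have h0 : 0 ≤ Real.logb 2 (δ / ε) := by
      by_contra h
      nlinarith
    have := Nat.floor_le h0
    rw [Real.le_logb_iff_rpow_le one_lt_two (by positivity), Real.rpow_natCast,
      le_div_iff₀ hε] at this
    exact this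
  · have h1 := Nat.lt_floor_add_one (Real.logb 2 (δ / ε))
    rw [one_div, Real.log_inv]
    have : (0 : ℝ) ≤ (⌊Real.logb 2 (δ / ε)⌋₊ : ℝ) := by positivity
    nlinarith

/-- there is `C > 0` with `C⁻¹ log(1/ε) ≤ |c^ε| ≤ C log(1/ε)` for all
sufficiently small `ε ∈ (0,1)`, and the same two-sided bounds hold for `Re c^ε`. -/
theorem statement5 (χ : (Fin 3 → ℝ) → ℝ) (hχcont : Continuous χ)
    (hχ01 : ∀ x, χ x ∈ Set.Icc (0 : ℝ) 1)
    (hχsupp : Function.support χ ⊆ {x | enorm3 x < 1}) (hχ0 : χ 0 = 1)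
    (μ : ℝ) (hμ : 0 < μ) :
    ∃ C : ℝ, 0 < C ∧ ∃ ε₀ ∈ Set.Ioo (0 : ℝ) 1, ∀ ε ∈ Set.Ioo (0 : ℝ) ε₀,
      (C⁻¹ * Real.log (1 / ε) ≤ ‖renormC χ μ ε‖ ∧
        ‖renormC χ μ ε‖ ≤ C * Real.log (1 / ε)) ∧
      (C⁻¹ * Real.log (1 / ε) ≤ (renormC χ μ ε).re ∧
        (renormC χ μ ε).re ≤ C * Real.log (1 / ε)) := by
  obtain ⟨δ, hδ, hδ1, hχδ⟩ : ∃ δ : ℝ, 0 < δ ∧ δ ≤ 1 ∧ ∀ x, ‖x‖ ≤ δ → 1 / 2 ≤ χ x := by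
    obtain ⟨r, hr, h⟩ := Metric.continuousAt_iff.1 hχcont.continuousAt (1 / 2) (by norm_num)
    refine ⟨min (r / 2) 1, by positivity, min_le_right _ _, fun x hx => ?_⟩
    have hxr : dist x 0 < r := by
      rw [dist_zero_right]
      linarith [hx.trans (min_le_left _ _)]
    have := (abs_lt.1 (h hxr)).1
    linarith
  set A := 4096 / min (4 * Real.pi ^ 2 * μ) 1 ^ 3
  have hApos : 0 < A := by positivity
  have hc := lowerConst_pos hμ
  refine ⟨4 * A + 2 / lowerConst μ, by positivity, (δ / 2) ^ 2, ⟨by positivity, by nlinarith⟩, ?_⟩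
  rintro ε ⟨hε, hεδ⟩
  obtain ⟨J, hJ, hJlog⟩ := exists_dyadic_upper hε (by nlinarith)
  obtain ⟨M, hM, hMlog⟩ := exists_dyadic_lower hδ hδ1 hε hεδ.le
  have hlog : 0 ≤ Real.log (1 / ε) := by
    have : (0 : ℝ) ≤ J := by positivity
    linarith
  have hupper : ‖renormC χ μ ε‖ ≤ (4 * A + 2 / lowerConst μ) * Real.log (1 / ε) :=
    calc _ ≤ A * (J + 1) := norm_renormC_le hχ01 hχsupp hμ hε hJ
      _ ≤ A * (4 * Real.log (1 / ε)) := by gcongr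
      _ = 4 * A * Real.log (1 / ε) := by ring
      _ ≤ _ := by
        gcongr
        exact le_add_of_nonneg_right (by positivity)
  have hlower : (4 * A + 2 / lowerConst μ)⁻¹ * Real.log (1 / ε) ≤ (renormC χ μ ε).re :=
    calc _ ≤ (2 / lowerConst μ)⁻¹ * Real.log (1 / ε) := by
          gcongr
          exact le_add_of_nonneg_left (by positivity)
      _ ≤ (2 / lowerConst μ)⁻¹ * (2 * M) := by gcongr
      _ = lowerConst μ * M := by field_simp
      _ ≤ _ := le_re_renormC hχsupp hμ hε hχδ hM
  have hre := Complex.re_le_norm (renormC χ μ ε)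
  exact ⟨⟨hlower.trans hre, hupper⟩, hlower, hre.trans hupper⟩
end
end

section
/- Let μ > 0 and P_t = e^{t((i+μ)Δ−1)} on T^3. Let α < 1, β ∈ R, δ ≥ 0. The commutator [P_t, u ≺]v = P_t(u ≺ v) − u ≺ (P_t v) satisfies ‖[P_t, u ≺]v‖_{C^{α+β+2δ}} ≲ t^{-δ} ‖u‖_{C^α} ‖v‖_{C^β}, uniformly over t > 0. -/
open scoped ENNReal

noncomputable section

/-- A dyadic partition of unity `{ρ_m}_{m ≥ -1}` on `ℝ³` (indexed by `ℤ`, with `ρ_m = 0`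
for `m < -1`). -/
def IsDyadicPartition (ρ : ℤ → (Fin 3 → ℝ) → ℝ) : Prop :=
  (∀ m, ContDiff ℝ (⊤ : ℕ∞) (ρ m)) ∧
  (∀ m x, ρ m x ∈ Set.Icc (0 : ℝ) 1) ∧
  (∀ m x y, enorm3 x = enorm3 y → ρ m x = ρ m y) ∧
  (∀ m, m < -1 → ρ m = 0) ∧
  (Function.support (ρ (-1)) ⊆ {x | enorm3 x < 4 / 3}) ∧
  (Function.support (ρ 0) ⊆ {x | 3 / 4 ≤ enorm3 x ∧ enorm3 x < 8 / 3}) ∧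
  (∀ m : ℤ, 0 ≤ m → ∀ x, ρ m x = ρ 0 (((2 : ℝ) ^ (-m)) • x)) ∧
  (∀ x, ∑' m : ℤ, ρ m x = 1)

/-- The Fourier mode `e_k(x) = e^{2πi k·x}` on the 3-torus, as a function on `ℝ³`. -/
def fourierMode (k : Fin 3 → ℤ) (x : Fin 3 → ℝ) : ℂ :=
  Complex.exp (2 * (Real.pi : ℂ) * Complex.I * ∑ i, (k i : ℂ) * (x i : ℂ))

/-- The Littlewood–Paley block `Δ_m f` of the distribution on `𝕋³` with Fourier
coefficients `c`. -/
def LPblock (ρ : ℤ → (Fin 3 → ℝ) → ℝ) (m : ℤ) (c : (Fin 3 → ℤ) → ℂ) (x : Fin 3 → ℝ) : ℂ :=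
  ∑' k : Fin 3 → ℤ, ((ρ m (latR k) : ℝ) : ℂ) * c k * fourierMode k x

/-- The (extended-real-valued) `L^∞` norm of a function on the torus. -/
def supNormE (u : (Fin 3 → ℝ) → ℂ) : ℝ≥0∞ := ⨆ x : Fin 3 → ℝ, (‖u x‖₊ : ℝ≥0∞)

/-- The Besov–Hölder `B^α_{∞,∞}(𝕋³)` norm (extended-real-valued), in terms of
Fourier coefficients: `sup_{m ≥ -1} 2^{mα} ‖Δ_m f‖_{L^∞}`. -/
def besovNorm (ρ : ℤ → (Fin 3 → ℝ) → ℝ) (α : ℝ) (c : (Fin 3 → ℤ) → ℂ) : ℝ≥0∞ :=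
  ⨆ m : ℤ, if -1 ≤ m then
    ENNReal.ofReal ((2 : ℝ) ^ ((m : ℝ) * α)) * supNormE (LPblock ρ m c) else 0

/-- Fourier coefficients of the Bony paraproduct `f ≺ g = Σ_{m₁+2 ≤ m₂} Δ_{m₁}f Δ_{m₂}g`. -/
def paraCoeff (ρ : ℤ → (Fin 3 → ℝ) → ℝ) (c d : (Fin 3 → ℤ) → ℂ) (k : Fin 3 → ℤ) : ℂ :=
  ∑' p : ℤ × ℤ × (Fin 3 → ℤ),
    if -1 ≤ p.1 ∧ p.1 + 2 ≤ p.2.1 then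
      ((ρ p.1 (latR p.2.2) : ℝ) : ℂ) * c p.2.2 *
        ((ρ p.2.1 (latR (k - p.2.2)) : ℝ) : ℂ) * d (k - p.2.2)
    else 0

/-- Fourier coefficients of the resonant product `f ⊙ g = Σ_{|m₁-m₂| ≤ 1} Δ_{m₁}f Δ_{m₂}g`. -/
def resonCoeff (ρ : ℤ → (Fin 3 → ℝ) → ℝ) (c d : (Fin 3 → ℤ) → ℂ) (k : Fin 3 → ℤ) : ℂ :=
  ∑' p : ℤ × ℤ × (Fin 3 → ℤ),
    if -1 ≤ p.1 ∧ -1 ≤ p.2.1 ∧ |p.1 - p.2.1| ≤ 1 then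
      ((ρ p.1 (latR p.2.2) : ℝ) : ℂ) * c p.2.2 *
        ((ρ p.2.1 (latR (k - p.2.2)) : ℝ) : ℂ) * d (k - p.2.2)
    else 0

/-- The Fourier multiplier of the semigroup `P_t = e^{t((i+μ)Δ − 1)}` on `𝕋³`:
`e^{t(−4π²(i+μ)|k|² − 1)}` on the mode `k ∈ ℤ³`. -/
def heatMul (μ t : ℝ) (k : Fin 3 → ℤ) : ℂ :=
  Complex.exp ((t : ℂ) * (-(4 * (Real.pi : ℂ) ^ 2) * (Complex.I + (μ : ℂ)) *
    (∑ i, (k i : ℂ) ^ 2) - (t : ℂ)))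


/-! ### Gaussians as Schwartz functions -/

lemma one_add_pow_mul_exp_neg_mul_sq_le (a : ℝ) (ha : 0 < a) (j : ℕ) (r : ℝ) (hr : 0 ≤ r) :
    (1 + r) ^ j * Real.exp (-a * r ^ 2) ≤ j.factorial * Real.exp (1 + 1 / (4 * a)) := by
  have h1 : (1 + r) ^ j ≤ j.factorial * Real.exp (1 + r) := by
    have := Real.pow_div_factorial_le_exp (1 + r) (by positivity) j
    rwa [div_le_iff₀' (by positivity)] at this
  calc (1 + r) ^ j * Real.exp (-a * r ^ 2)
      ≤ j.factorial * Real.exp (1 + r) * Real.exp (-a * r ^ 2) := by gcongr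
    _ = j.factorial * Real.exp (1 + r + -a * r ^ 2) := by rw [mul_assoc, ← Real.exp_add]
    _ ≤ _ := by
      gcongr ?_ * Real.exp ?_
      have h : 0 ≤ a * (r - 1 / (2 * a)) ^ 2 := by positivity
      have e : a * (r - 1 / (2 * a)) ^ 2 = a * r ^ 2 - r + 1 / (4 * a) := by
        field_simp
        ring
      linarith

lemma iteratedDeriv_cexp_mul_ofReal (w : ℂ) (n : ℕ) :
    iteratedDeriv n (fun r : ℝ => Complex.exp (w * r)) =
      fun r : ℝ => w ^ n * Complex.exp (w * r) := by
  induction n with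
  | zero => simp
  | succ n ih =>
    rw [iteratedDeriv_succ, ih]
    funext r
    have h : HasDerivAt (fun r : ℝ => Complex.exp (w * r)) (Complex.exp (w * r) * (w * 1)) r :=
      ((Complex.ofRealCLM.hasDerivAt (x := r)).const_mul w).cexp
    rw [(h.const_mul (w ^ n)).deriv]
    ring

lemma contDiff_cexp_mul_ofReal (w : ℂ) {n : WithTop ℕ∞} :
    ContDiff ℝ n (fun r : ℝ => Complex.exp (w * r)) :=
  (contDiff_const.mul Complex.ofRealCLM.contDiff).cexp

section Gaussian

variable {E : Type*} [NormedAddCommGroup E] [InnerProductSpace ℝ E]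

/-- The complex Gaussian `x ↦ e^{-w|x|²}` with `Re w > 0`, as a Schwartz function. -/
def gaussianSchwartz (w : ℂ) (hw : 0 < w.re) : SchwartzMap E ℂ where
  toFun x := Complex.exp (-w * ((‖x‖ ^ 2 : ℝ) : ℂ))
  smooth' := (contDiff_cexp_mul_ofReal (-w)).comp (contDiff_norm_sq ℝ)
  decay' := by
    intro p n
    obtain ⟨k, K, hK0, hK⟩ :=
      (Function.hasTemperateGrowth_norm_sq E).norm_iteratedFDeriv_le_uniform n
    set K' : ℝ := max 1 K with hK'
    set W : ℝ := max 1 ‖w‖ with hW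
    have hW1 : 1 ≤ W := le_max_left _ _
    refine ⟨n.factorial * W ^ n * K' ^ n *
      ((p + k * n).factorial * Real.exp (1 + 1 / (4 * w.re))), fun x => ?_⟩
    have hx : 1 ≤ 1 + ‖x‖ := by linarith [norm_nonneg x]
    have hD1 : 1 ≤ K' * (1 + ‖x‖) ^ k :=
      one_le_mul_of_one_le_of_one_le (le_max_left _ _) (one_le_pow₀ hx)
    have hnorm : ‖Complex.exp (-w * ((‖x‖ ^ 2 : ℝ) : ℂ))‖ = Real.exp (-w.re * ‖x‖ ^ 2) := by
      rw [Complex.norm_exp, Complex.re_mul_ofReal, Complex.neg_re]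
    have key := norm_iteratedFDeriv_comp_le (𝕜 := ℝ)
      (g := fun r : ℝ => Complex.exp (-w * r)) (f := fun x : E => ‖x‖ ^ 2) (n := n)
      (N := (n : WithTop ℕ∞)) (contDiff_cexp_mul_ofReal (-w)) (contDiff_norm_sq ℝ) le_rfl x
      (C := W ^ n * Real.exp (-w.re * ‖x‖ ^ 2)) (D := K' * (1 + ‖x‖) ^ k)
      (fun i hi => by
        rw [norm_iteratedFDeriv_eq_norm_iteratedDeriv, iteratedDeriv_cexp_mul_ofReal,
          norm_mul, norm_pow, norm_neg, hnorm]
        gcongr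
        calc ‖w‖ ^ i ≤ W ^ i := by gcongr; exact le_max_right _ _
          _ ≤ W ^ n := pow_le_pow_right₀ hW1 hi)
      (fun i h1 hi => by
        calc _ ≤ K * (1 + ‖x‖) ^ k := hK i hi x
          _ ≤ K' * (1 + ‖x‖) ^ k := by gcongr; exact le_max_right _ _
          _ ≤ _ := le_self_pow₀ hD1 (by omega))
    have hp : ‖x‖ ^ p ≤ (1 + ‖x‖) ^ p := by gcongr; linarith
    calc _ ≤ (1 + ‖x‖) ^ p * (n.factorial * (W ^ n * Real.exp (-w.re * ‖x‖ ^ 2)) *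
          (K' * (1 + ‖x‖) ^ k) ^ n) := by
          gcongr
          exact key
      _ = n.factorial * W ^ n * K' ^ n *
          ((1 + ‖x‖) ^ (p + k * n) * Real.exp (-w.re * ‖x‖ ^ 2)) := by
          rw [mul_pow, ← pow_mul, pow_add]
          ring
      _ ≤ _ := by
          refine mul_le_mul_of_nonneg_left ?_ (by positivity)
          exact one_add_pow_mul_exp_neg_mul_sq_le _ hw _ _ (norm_nonneg x)

/-- The Schwartz function `x ↦ |x|^{2N} e^{-w|x|²}`. -/
def powGaussian (w : ℂ) (hw : 0 < w.re) (N : ℕ) : SchwartzMap E ℂ :=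
  SchwartzMap.smulLeftCLM ℂ (fun x : E => (‖x‖ ^ 2) ^ N) (gaussianSchwartz w hw)

lemma powGaussian_apply (w : ℂ) (hw : 0 < w.re) (N : ℕ) (x : E) :
    powGaussian w hw N x = ((‖x‖ ^ 2) ^ N : ℝ) * Complex.exp (-w * ((‖x‖ ^ 2 : ℝ) : ℂ)) := by
  have h : (fun x : E => (‖x‖ ^ 2) ^ N).HasTemperateGrowth :=
    Function.HasTemperateGrowth.pow (Function.hasTemperateGrowth_norm_sq E) N
  rw [powGaussian, SchwartzMap.smulLeftCLM_apply_apply h, Complex.real_smul]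
  rfl

/-- A smooth compactly supported function equal to `|x|^{-2N}` for `1/12 ≤ |x| ≤ 4`. -/
lemma exists_schwartz_eq_inv_norm_pow [FiniteDimensional ℝ E] (N : ℕ) :
    ∃ Φ : SchwartzMap E ℂ, ∀ x : E, 1 / 12 ≤ ‖x‖ → ‖x‖ ≤ 4 →
      Φ x = ((((‖x‖ ^ 2) ^ N)⁻¹ : ℝ) : ℂ) := by
  let b : ContDiffBump (0 : E) := ⟨4, 5, by norm_num, by norm_num⟩
  let s : ContDiffBump (0 : E) := ⟨1 / 24, 1 / 12, by norm_num, by norm_num⟩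
  have hpos : ∀ x : E, 0 < ‖x‖ ^ 2 + s x := by
    intro x
    by_cases hx : x = 0
    · subst hx
      have : s (0 : E) = 1 := s.one_of_mem_closedBall (by simp [s])
      rw [this]; positivity
    · have := s.nonneg (x := x)
      have : 0 < ‖x‖ := norm_pos_iff.2 hx
      positivity
  let f : E → ℂ := fun x => ((b x * ((‖x‖ ^ 2 + s x) ^ N)⁻¹ : ℝ) : ℂ)
  have hf : ContDiff ℝ (⊤ : ℕ∞) f := by
    refine Complex.ofRealCLM.contDiff.comp (b.contDiff.mul (ContDiff.inv ?_ ?_))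
    · exact ((contDiff_norm_sq ℝ).add s.contDiff).pow N
    · exact fun x => (pow_pos (hpos x) N).ne'
  have hs : HasCompactSupport f := by
    refine b.hasCompactSupport.mono fun x hx => ?_
    simp only [Function.mem_support, f] at hx ⊢
    intro h
    exact hx (by simp [h])
  refine ⟨hs.toSchwartzMap hf, fun x h1 h2 => ?_⟩
  have hb : b x = 1 := b.one_of_mem_closedBall (by simpa [b] using h2)
  have hsx : s x = 0 := s.zero_of_le_dist (by simpa [s] using h1)
  change f x = _
  simp [f, hb, hsx]

/-- A smooth compactly supported function equal to `L x` for `|x| ≤ 4`. -/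
lemma exists_schwartz_eq_linear [FiniteDimensional ℝ E] (A : E →L[ℝ] ℂ) :
    ∃ Φ : SchwartzMap E ℂ, ∀ x : E, ‖x‖ ≤ 4 → Φ x = A x := by
  let b : ContDiffBump (0 : E) := ⟨4, 5, by norm_num, by norm_num⟩
  let f : E → ℂ := fun x => b x • A x
  have hf : ContDiff ℝ (⊤ : ℕ∞) f := b.contDiff.smul A.contDiff
  have hs : HasCompactSupport f := b.hasCompactSupport.smul_right
  refine ⟨hs.toSchwartzMap hf, fun x h => ?_⟩
  have hb : b x = 1 := b.one_of_mem_closedBall (by simpa [b] using h)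
  change f x = _
  simp [f, hb]

end Gaussian

/-! ### Trigonometric polynomials and Fourier multipliers -/

/-- Trigonometric polynomials on `𝕋³`, given by their Fourier coefficients. -/
abbrev TrigPoly := AddMonoidAlgebra ℂ (Fin 3 → ℤ)

/-- The frequency `k ∈ ℤ³` as a point of Euclidean space. -/
def latE (k : Fin 3 → ℤ) : EuclideanSpace ℝ (Fin 3) := WithLp.toLp 2 (latR k)

lemma fourierMode_add_left (k l : Fin 3 → ℤ) (x : Fin 3 → ℝ) :
    fourierMode (k + l) x = fourierMode k x * fourierMode l x := by
  simp only [fourierMode, ← Complex.exp_add, Pi.add_apply, Int.cast_add, add_mul,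
    Finset.sum_add_distrib, mul_add]

lemma fourierMode_add_right (k : Fin 3 → ℤ) (x y : Fin 3 → ℝ) :
    fourierMode k (x + y) = fourierMode k x * fourierMode k y := by
  simp only [fourierMode, ← Complex.exp_add, Pi.add_apply, Complex.ofReal_add,
    Finset.sum_add_distrib, mul_add]

lemma fourierMode_zero_left (x : Fin 3 → ℝ) : fourierMode 0 x = 1 := by
  simp [fourierMode]

lemma fourierMode_eq_exp_ofReal_mul_I (k : Fin 3 → ℤ) (x : Fin 3 → ℝ) :
    fourierMode k x = Complex.exp (((2 * Real.pi * ∑ i, (k i : ℝ) * x i : ℝ) : ℂ) * Complex.I) := by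
  rw [fourierMode]
  push_cast
  ring_nf

lemma norm_fourierMode (k : Fin 3 → ℤ) (x : Fin 3 → ℝ) : ‖fourierMode k x‖ = 1 := by
  rw [fourierMode_eq_exp_ofReal_mul_I, Complex.norm_exp_ofReal_mul_I]

lemma continuous_fourierMode (k : Fin 3 → ℤ) : Continuous (fourierMode k) := by
  unfold fourierMode
  fun_prop

namespace TrigPoly

/-- Evaluation of a trigonometric polynomial at a point. -/
def ev (x : Fin 3 → ℝ) : TrigPoly →ₐ[ℂ] ℂ :=
  AddMonoidAlgebra.lift ℂ ℂ (Fin 3 → ℤ)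
    { toFun := fun k => fourierMode k.toAdd x
      map_one' := fourierMode_zero_left x
      map_mul' := fun k l => fourierMode_add_left k.toAdd l.toAdd x }

lemma ev_single (x : Fin 3 → ℝ) (k : Fin 3 → ℤ) (a : ℂ) :
    ev x (AddMonoidAlgebra.single k a) = a * fourierMode k x := by
  simp [ev]

lemma ev_eq_sum (x : Fin 3 → ℝ) (h : TrigPoly) :
    ev x h = ∑ k ∈ h.coeff.support, h.coeff k * fourierMode k x := by
  simp [ev, AddMonoidAlgebra.lift_apply, Finsupp.sum]

lemma continuous_ev (h : TrigPoly) : Continuous fun x => ev x h := by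
  simp only [ev_eq_sum]
  exact continuous_finsetSum _ fun k _ => continuous_const.mul (continuous_fourierMode k)

lemma norm_ev_le (x : Fin 3 → ℝ) (h : TrigPoly) :
    ‖ev x h‖ ≤ ∑ k ∈ h.coeff.support, ‖h.coeff k‖ := by
  rw [ev_eq_sum]
  refine (norm_sum_le _ _).trans (Finset.sum_le_sum fun k _ => ?_)
  rw [norm_mul, norm_fourierMode, mul_one]

/-- The Fourier multiplier with symbol `σ`. -/
def mulOp (σ : (Fin 3 → ℤ) → ℂ) : TrigPoly →ₗ[ℂ] TrigPoly where
  toFun h := AddMonoidAlgebra.ofCoeff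
    (Finsupp.onFinset h.coeff.support (fun k => σ k * h.coeff k) fun k hk => by
      simpa using right_ne_zero_of_mul hk)
  map_add' f g := by
    ext k
    simp [mul_add]
  map_smul' a f := by
    ext k
    simp [mul_left_comm]

lemma coeff_mulOp (σ : (Fin 3 → ℤ) → ℂ) (h : TrigPoly) (k : Fin 3 → ℤ) :
    (mulOp σ h).coeff k = σ k * h.coeff k := rfl

lemma mulOp_single (σ : (Fin 3 → ℤ) → ℂ) (k : Fin 3 → ℤ) (a : ℂ) :
    mulOp σ (AddMonoidAlgebra.single k a) = AddMonoidAlgebra.single k (σ k * a) := by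
  classical
  ext l
  rw [coeff_mulOp, AddMonoidAlgebra.coeff_single, AddMonoidAlgebra.coeff_single,
    Finsupp.single_apply, Finsupp.single_apply]
  split_ifs with h
  · rw [h]
  · simp

lemma mulOp_congr {σ τ : (Fin 3 → ℤ) → ℂ} {h : TrigPoly}
    (hστ : ∀ k, h.coeff k ≠ 0 → σ k = τ k) : mulOp σ h = mulOp τ h := by
  ext k
  rw [coeff_mulOp, coeff_mulOp]
  by_cases hk : h.coeff k = 0
  · simp [hk]
  · rw [hστ k hk]

lemma mulOp_mul (σ τ : (Fin 3 → ℤ) → ℂ) (h : TrigPoly) :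
    mulOp (fun k => σ k * τ k) h = mulOp σ (mulOp τ h) := by
  ext k
  simp only [coeff_mulOp, mul_assoc]

lemma mulOp_const_mul (a : ℂ) (σ : (Fin 3 → ℤ) → ℂ) (h : TrigPoly) :
    mulOp (fun k => a * σ k) h = a • mulOp σ h := by
  ext k
  simp only [coeff_mulOp, mul_assoc, AddMonoidAlgebra.coeff_smul_apply, smul_eq_mul]

/-- The multiplier `σ` is bounded by `M` on `L^∞`. -/
def MulBound (σ : (Fin 3 → ℤ) → ℂ) (M : ℝ) : Prop :=
  ∀ (h : TrigPoly) (B : ℝ), (∀ x, ‖ev x h‖ ≤ B) → ∀ x, ‖ev x (mulOp σ h)‖ ≤ M * B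

/-- The trigonometric polynomial `f` is `Λ`-Lipschitz. -/
def LipBound (f : TrigPoly) (Λ : ℝ) : Prop :=
  ∀ (x : Fin 3 → ℝ) (y : EuclideanSpace ℝ (Fin 3)),
    ‖ev (x + y.ofLp) f - ev x f‖ ≤ Λ * ‖y‖

/-- The commutator of the multiplier `σ` with multiplication by a `Λ`-Lipschitz function is
bounded by `L * Λ` on `L^∞`. -/
def CommBound (σ : (Fin 3 → ℤ) → ℂ) (L : ℝ) : Prop :=
  ∀ (f g : TrigPoly) (Λ B : ℝ), LipBound f Λ → (∀ x, ‖ev x g‖ ≤ B) →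
    ∀ x, ‖ev x (mulOp σ (f * g) - f * mulOp σ g)‖ ≤ L * Λ * B

lemma CommBound.mul {σ τ : (Fin 3 → ℤ) → ℂ} {M M' L L' : ℝ} (hσ : MulBound σ M)
    (hσ' : CommBound σ L) (hτ : MulBound τ M') (hτ' : CommBound τ L') :
    CommBound (fun k => σ k * τ k) (M * L' + L * M') := by
  intro f g Λ B hf hg x
  have e : mulOp (fun k => σ k * τ k) (f * g) - f * mulOp (fun k => σ k * τ k) g =
      mulOp σ (mulOp τ (f * g) - f * mulOp τ g) +
        (mulOp σ (f * mulOp τ g) - f * mulOp σ (mulOp τ g)) := by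
    rw [mulOp_mul, mulOp_mul, map_sub]
    abel
  rw [e, map_add]
  calc _ ≤ M * (L' * Λ * B) + L * Λ * (M' * B) :=
        (norm_add_le _ _).trans (add_le_add (hσ _ _ (hτ' f g Λ B hf hg) x)
          (hσ' f _ Λ _ hf (hτ g B hg) x))
    _ = _ := by ring

lemma CommBound.const_mul {σ : (Fin 3 → ℤ) → ℂ} {L : ℝ} (hσ : CommBound σ L) (a : ℂ) :
    CommBound (fun k => a * σ k) (‖a‖ * L) := by
  intro f g Λ B hf hg x
  have e : mulOp (fun k => a * σ k) (f * g) - f * mulOp (fun k => a * σ k) g =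
      a • (mulOp σ (f * g) - f * mulOp σ g) := by
    rw [mulOp_const_mul, mulOp_const_mul, mul_smul_comm, smul_sub]
  rw [e, map_smul, norm_smul, mul_assoc, mul_assoc, ← mul_assoc L]
  gcongr
  exact hσ f g Λ B hf hg x

section SchwartzSymbol

open scoped FourierTransform
open MeasureTheory

variable (Φ : SchwartzMap (EuclideanSpace ℝ (Fin 3)) ℂ) (r : ℝ)

lemma integrable_fourier_mul_ev (h : TrigPoly) (x : Fin 3 → ℝ) :
    Integrable fun w : EuclideanSpace ℝ (Fin 3) => 𝓕 Φ w * ev (x + r • w.ofLp) h := by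
  refine (𝓕 Φ).integrable.mul_bdd (c := ∑ k ∈ h.coeff.support, ‖h.coeff k‖) ?_ ?_
  · exact ((continuous_ev h).comp (by fun_prop)).aestronglyMeasurable
  · exact .of_forall fun w => norm_ev_le _ _

lemma fourierMode_smul_ofLp (k : Fin 3 → ℤ) (w : EuclideanSpace ℝ (Fin 3)) :
    fourierMode k (r • w.ofLp) =
      Complex.exp (((2 * Real.pi * inner ℝ w (r • latE k) : ℝ) : ℂ) * Complex.I) := by
  rw [fourierMode_eq_exp_ofReal_mul_I]
  congr 4
  simp only [PiLp.inner_apply, latE, latR, Pi.smul_apply, PiLp.smul_apply, smul_eq_mul,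
    RCLike.inner_apply, conj_trivial]
  exact Finset.sum_congr rfl fun i _ => by ring

lemma ev_mulOp_schwartz (h : TrigPoly) (x : Fin 3 → ℝ) :
    ev x (mulOp (fun k => Φ (r • latE k)) h) = ∫ w, 𝓕 Φ w * ev (x + r • w.ofLp) h := by
  induction h using AddMonoidAlgebra.induction_linear with
  | zero => simp
  | add f g hf hg =>
    simp only [map_add, mul_add]
    rw [integral_add (integrable_fourier_mul_ev Φ r f x) (integrable_fourier_mul_ev Φ r g x),
      hf, hg]
  | single k a =>
    have hinv : Φ (r • latE k) = ∫ w, 𝓕 Φ w * fourierMode k (r • w.ofLp) := by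
      conv_lhs => rw [← FourierTransform.fourierInv_fourier_eq (E := SchwartzMap _ ℂ)
        (F := SchwartzMap (EuclideanSpace ℝ (Fin 3)) ℂ) Φ, SchwartzMap.fourierInv_coe,
        Real.fourierInv_eq']
      refine integral_congr_ae (.of_forall fun w => ?_)
      simp only [smul_eq_mul]
      rw [fourierMode_smul_ofLp, mul_comm]
    rw [mulOp_single, ev_single, hinv]
    simp only [ev_single, fourierMode_add_right]
    rw [mul_assoc, ← integral_mul_const]
    refine integral_congr_ae (.of_forall fun w => ?_)
    ring

lemma mulBound_schwartz : MulBound (fun k => Φ (r • latE k)) (∫ w, ‖𝓕 Φ w‖) := by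
  intro h B hB x
  rw [ev_mulOp_schwartz, ← integral_mul_const]
  refine norm_integral_le_of_norm_le ((𝓕 Φ).integrable.norm.mul_const B)
    (.of_forall fun w => ?_)
  rw [norm_mul]
  gcongr
  exact hB _

lemma commBound_schwartz (hr : 0 ≤ r) :
    CommBound (fun k => Φ (r • latE k)) (r * ∫ w, ‖w‖ * ‖𝓕 Φ w‖) := by
  intro f g Λ B hf hg x
  have hint : Integrable fun w : EuclideanSpace ℝ (Fin 3) => ‖w‖ * ‖𝓕 Φ w‖ := by
    have h := (𝓕 Φ).integrable_pow_mul volume 1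
    simp only [pow_one] at h
    exact h
  have e : ev x (mulOp (fun k => Φ (r • latE k)) (f * g) -
      f * mulOp (fun k => Φ (r • latE k)) g) =
      ∫ w, 𝓕 Φ w * ((ev (x + r • w.ofLp) f - ev x f) * ev (x + r • w.ofLp) g) := by
    rw [map_sub, map_mul (ev x), ev_mulOp_schwartz, ev_mulOp_schwartz, ← integral_const_mul,
      ← integral_sub (integrable_fourier_mul_ev Φ r _ x)
        ((integrable_fourier_mul_ev Φ r _ x).const_mul _)]
    refine integral_congr_ae (.of_forall fun w => ?_)
    simp only [map_mul]
    ring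
  rw [e]
  calc _ ≤ ∫ w, (‖w‖ * ‖𝓕 Φ w‖) * (r * Λ * B) := by
        refine norm_integral_le_of_norm_le (hint.mul_const _) (.of_forall fun w => ?_)
        rw [norm_mul, norm_mul]
        have h1 := hf x (r • w)
        rw [norm_smul, Real.norm_of_nonneg hr] at h1
        calc _ ≤ ‖𝓕 Φ w‖ * ((Λ * (r * ‖w‖)) * B) := by
              gcongr
              · exact (norm_nonneg _).trans h1
              · exact h1
              · exact hg _
          _ = _ := by ring
    _ = _ := by rw [integral_mul_const]; ring

end SchwartzSymbol

lemma hasDerivAt_ev_line (f : TrigPoly) (x : Fin 3 → ℝ) (y : EuclideanSpace ℝ (Fin 3)) (s : ℝ) :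
    HasDerivAt (fun s : ℝ => ev (x + s • y.ofLp) f)
      (∑ i, (y i : ℂ) * ev (x + s • y.ofLp)
        (mulOp (fun k => 2 * Real.pi * Complex.I * (k i : ℂ)) f)) s := by
  induction f using AddMonoidAlgebra.induction_linear with
  | zero => simpa using hasDerivAt_const s (0 : ℂ)
  | add f g hf hg =>
    simp only [map_add, mul_add, Finset.sum_add_distrib]
    exact hf.add hg
  | single k a =>
    simp only [mulOp_single, ev_single]
    have h0 : HasDerivAt (fun s : ℝ => 2 * (Real.pi : ℂ) * Complex.I *
        ∑ i, (k i : ℂ) * ((x + s • y.ofLp) i : ℂ))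
        (2 * (Real.pi : ℂ) * Complex.I * ∑ i, (k i : ℂ) * (y i : ℂ)) s := by
      refine HasDerivAt.const_mul _ (HasDerivAt.fun_sum fun i _ => HasDerivAt.const_mul _ ?_)
      simp only [Pi.add_apply, Pi.smul_apply, smul_eq_mul]
      refine HasDerivAt.ofReal_comp ?_
      simpa using ((hasDerivAt_id s).mul_const (y i)).const_add (x i)
    refine (h0.cexp.const_mul a).congr_deriv ?_
    rw [← fourierMode, Finset.mul_sum, Finset.mul_sum, Finset.mul_sum]
    exact Finset.sum_congr rfl fun i _ => by ring

lemma lipBound_of_partial_le {f : TrigPoly} {G : ℝ}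
    (hG : ∀ i x, ‖ev x (mulOp (fun k => 2 * Real.pi * Complex.I * (k i : ℂ)) f)‖ ≤ G) :
    LipBound f (3 * G) := by
  intro x y
  have hG0 : 0 ≤ G := (norm_nonneg _).trans (hG 0 0)
  have h := norm_image_sub_le_of_norm_deriv_le_segment_01'
    (f := fun s : ℝ => ev (x + s • y.ofLp) f) (C := 3 * G * ‖y‖)
    (fun s _ => (hasDerivAt_ev_line f x y s).hasDerivWithinAt) (fun s _ => by
      refine (norm_sum_le _ _).trans ?_
      calc _ ≤ ∑ _i : Fin 3, ‖y‖ * G := by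
            refine Finset.sum_le_sum fun i _ => ?_
            rw [norm_mul, Complex.norm_real]
            gcongr
            · exact PiLp.norm_apply_le y i
            · exact hG _ _
        _ = _ := by simp; ring)
  simpa using h

/-- Bernstein's inequality. -/
lemma exists_bernstein : ∃ K : ℝ, 0 ≤ K ∧ ∀ (f : TrigPoly) (B r : ℝ), 0 < r →
    (∀ k, f.coeff k ≠ 0 → ‖r • latE k‖ ≤ 4) → (∀ x, ‖ev x f‖ ≤ B) →
    LipBound f (K * r⁻¹ * B) := by
  have hex : ∀ i : Fin 3, ∃ Φ : SchwartzMap (EuclideanSpace ℝ (Fin 3)) ℂ, ∀ x,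
      ‖x‖ ≤ 4 → Φ x = 2 * Real.pi * Complex.I * (x i : ℂ) := fun i => by
    obtain ⟨Φ, hΦ⟩ := exists_schwartz_eq_linear (((2 * Real.pi * Complex.I : ℂ)) •
      (Complex.ofRealCLM.comp (EuclideanSpace.proj i : EuclideanSpace ℝ (Fin 3) →L[ℝ] ℝ)))
    exact ⟨Φ, fun x hx => by simpa using hΦ x hx⟩
  choose Φ hΦ using hex
  let M : Fin 3 → ℝ := fun i => ∫ w, ‖(FourierTransform.fourier (Φ i)) w‖
  have hM : ∀ i, 0 ≤ M i := fun i => MeasureTheory.integral_nonneg fun _ => norm_nonneg _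
  refine ⟨3 * ∑ i, M i, mul_nonneg (by norm_num) (Finset.sum_nonneg fun i _ => hM i), ?_⟩
  intro f B r hr hf hB
  have hB0 : 0 ≤ B := (norm_nonneg _).trans (hB 0)
  rw [mul_assoc, mul_assoc]
  refine lipBound_of_partial_le fun i x => ?_
  have e : mulOp (fun k => 2 * Real.pi * Complex.I * (k i : ℂ)) f =
      (r⁻¹ : ℂ) • mulOp (fun k => Φ i (r • latE k)) f := by
    rw [← mulOp_const_mul]
    refine mulOp_congr fun k hk => ?_
    have hr' : (r : ℂ) ≠ 0 := by exact_mod_cast hr.ne'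
    rw [hΦ i _ (hf k hk)]
    simp only [PiLp.smul_apply, latE, latR, smul_eq_mul, Complex.ofReal_mul,
      Complex.ofReal_intCast]
    field_simp
  rw [e, map_smul, norm_smul, norm_inv, Complex.norm_real, Real.norm_of_nonneg hr.le]
  calc _ ≤ r⁻¹ * (M i * B) := by
        gcongr
        exact mulBound_schwartz (Φ i) r f B hB x
    _ ≤ r⁻¹ * ((∑ i, M i) * B) := by
        gcongr
        exact Finset.single_le_sum (fun i _ => hM i) (Finset.mem_univ i)
    _ = _ := by ring

end TrigPoly

/-! ### The heat semigroup on an annulus -/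

namespace TrigPoly

lemma LipBound.nonneg {f : TrigPoly} {Λ : ℝ} (hf : LipBound f Λ) : 0 ≤ Λ := by
  have h := (norm_nonneg _).trans (hf 0 (EuclideanSpace.single 0 1))
  simpa using h

lemma CommBound.mono {σ : (Fin 3 → ℤ) → ℂ} {L L' : ℝ} (hσ : CommBound σ L) (hL : L ≤ L') :
    CommBound σ L' := by
  intro f g Λ B hf hg x
  have := hf.nonneg
  have : 0 ≤ B := (norm_nonneg _).trans (hg 0)
  exact (hσ f g Λ B hf hg x).trans (by gcongr)

lemma norm_latE_sq (k : Fin 3 → ℤ) : ‖latE k‖ ^ 2 = ∑ i, (k i : ℝ) ^ 2 := by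
  simp [EuclideanSpace.norm_sq_eq, latE, latR]

lemma heatMul_eq (μ t : ℝ) (ht : 0 ≤ t) (k : Fin 3 → ℤ) :
    heatMul μ t k = (Real.exp (-t ^ 2) : ℂ) *
      Complex.exp (-(4 * (Real.pi : ℂ) ^ 2 * (Complex.I + μ)) *
        ((‖√t • latE k‖ ^ 2 : ℝ) : ℂ)) := by
  rw [norm_smul, mul_pow, norm_latE_sq, Real.norm_of_nonneg (Real.sqrt_nonneg t),
    Real.sq_sqrt ht, Complex.ofReal_exp, ← Complex.exp_add, heatMul]
  push_cast
  ring_nf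

lemma exists_heat_commBound_pow (μ : ℝ) (hμ : 0 < μ) (N : ℕ) :
    ∃ K : ℝ, 0 ≤ K ∧ ∀ t r : ℝ, 0 < t → 0 < r → ∃ σ : (Fin 3 → ℤ) → ℂ,
      (∀ k, 1 / 12 ≤ ‖r • latE k‖ → ‖r • latE k‖ ≤ 4 → heatMul μ t k = σ k) ∧
        CommBound σ (K * r * ((t / r ^ 2) ^ N)⁻¹ * (1 + √(t / r ^ 2))) := by
  set w : ℂ := 4 * (Real.pi : ℂ) ^ 2 * (Complex.I + μ) with hw
  have hwre : 0 < w.re := by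
    have : w = ((4 * Real.pi ^ 2 : ℝ) : ℂ) * (Complex.I + μ) := by rw [hw]; push_cast; ring
    rw [this, Complex.re_ofReal_mul]
    simp
    positivity
  let G : SchwartzMap (EuclideanSpace ℝ (Fin 3)) ℂ := powGaussian w hwre N
  obtain ⟨θ, hθ⟩ := exists_schwartz_eq_inv_norm_pow (E := EuclideanSpace ℝ (Fin 3)) N
  set MG := ∫ x, ‖(FourierTransform.fourier G) x‖ with hMG
  set Mθ := ∫ x, ‖(FourierTransform.fourier θ) x‖ with hMθ
  set LG := ∫ x, ‖x‖ * ‖(FourierTransform.fourier G) x‖ with hLG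
  set Lθ := ∫ x, ‖x‖ * ‖(FourierTransform.fourier θ) x‖ with hLθ
  have hMG0 : 0 ≤ MG := MeasureTheory.integral_nonneg fun _ => norm_nonneg _
  have hMθ0 : 0 ≤ Mθ := MeasureTheory.integral_nonneg fun _ => norm_nonneg _
  have hLG0 : 0 ≤ LG := MeasureTheory.integral_nonneg fun _ => by positivity
  have hLθ0 : 0 ≤ Lθ := MeasureTheory.integral_nonneg fun _ => by positivity
  refine ⟨MG * Lθ + LG * Mθ, by positivity, fun t r ht hr => ?_⟩
  set a : ℝ := Real.exp (-t ^ 2) * ((t / r ^ 2) ^ N)⁻¹ with ha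
  refine ⟨fun k => (a : ℂ) * (G (√t • latE k) * θ (r • latE k)), fun k h1 h2 => ?_, ?_⟩
  · have hG : G (√t • latE k) = _ := powGaussian_apply w hwre N (√t • latE k)
    beta_reduce
    rw [hG, hθ _ h1 h2, heatMul_eq μ t ht.le, ← hw]
    have hk : 0 < ‖latE k‖ := by
      rw [norm_smul] at h1
      by_contra h
      have : ‖latE k‖ = 0 := le_antisymm (not_lt.1 h) (norm_nonneg _)
      rw [this] at h1
      norm_num at h1
    have hreal : ((t / r ^ 2) ^ N)⁻¹ * (‖√t • latE k‖ ^ 2) ^ N * ((‖r • latE k‖ ^ 2) ^ N)⁻¹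
        = 1 := by
      rw [norm_smul, norm_smul, Real.norm_of_nonneg (Real.sqrt_nonneg t),
        Real.norm_of_nonneg hr.le, mul_pow (√t), Real.sq_sqrt ht.le, ← inv_pow, ← inv_pow,
        ← mul_pow, ← mul_pow]
      have : (t / r ^ 2)⁻¹ * (t * ‖latE k‖ ^ 2) * ((r * ‖latE k‖) ^ 2)⁻¹ = 1 := by
        field_simp
      rw [this, one_pow]
    have hc : ((((t / r ^ 2) ^ N)⁻¹ : ℝ) : ℂ) * (((‖√t • latE k‖ ^ 2) ^ N : ℝ) : ℂ) *
        ((((‖r • latE k‖ ^ 2) ^ N)⁻¹ : ℝ) : ℂ) = 1 := by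
      exact_mod_cast hreal
    rw [ha, Complex.ofReal_mul]
    linear_combination (-(Real.exp (-t ^ 2) : ℂ) *
      Complex.exp (-w * ((‖√t • latE k‖ ^ 2 : ℝ) : ℂ))) * hc
  · refine ((CommBound.mul (mulBound_schwartz G (√t))
      (commBound_schwartz G (√t) (Real.sqrt_nonneg t)) (mulBound_schwartz θ r)
      (commBound_schwartz θ r hr.le)).const_mul (a : ℂ)).mono ?_
    rw [← hMG, ← hMθ, ← hLG, ← hLθ, Complex.norm_real, Real.norm_of_nonneg (by positivity)]
    have hs : √t = r * √(t / r ^ 2) := by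
      rw [Real.sqrt_div ht.le, Real.sqrt_sq hr.le]
      field_simp
    have ha1 : a ≤ ((t / r ^ 2) ^ N)⁻¹ := by
      rw [ha]
      refine mul_le_of_le_one_left (by positivity) (Real.exp_le_one_iff.2 ?_)
      nlinarith [sq_nonneg t]
    calc _ ≤ ((t / r ^ 2) ^ N)⁻¹ * (MG * (r * Lθ) + √t * LG * Mθ) := by gcongr
      _ = ((t / r ^ 2) ^ N)⁻¹ * r * (MG * Lθ + √(t / r ^ 2) * (LG * Mθ)) := by
          rw [hs]; ring
      _ ≤ ((t / r ^ 2) ^ N)⁻¹ * r *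
          ((MG * Lθ + LG * Mθ) * (1 + √(t / r ^ 2))) := by
          gcongr
          have : 0 ≤ √(t / r ^ 2) := Real.sqrt_nonneg _
          nlinarith [mul_nonneg this (mul_nonneg hMG0 hLθ0), mul_nonneg hLG0 hMθ0]
      _ = _ := by ring

lemma exists_heat_commBound (μ : ℝ) (hμ : 0 < μ) (δ : ℝ) (hδ : 0 ≤ δ) :
    ∃ K : ℝ, 0 ≤ K ∧ ∀ t r : ℝ, 0 < t → 0 < r → ∃ σ : (Fin 3 → ℤ) → ℂ,
      (∀ k, 1 / 12 ≤ ‖r • latE k‖ → ‖r • latE k‖ ≤ 4 → heatMul μ t k = σ k) ∧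
        CommBound σ (K * r * (t / r ^ 2) ^ (-δ)) := by
  obtain ⟨K₀, hK₀, h₀⟩ := exists_heat_commBound_pow μ hμ 0
  obtain ⟨K₁, hK₁, h₁⟩ := exists_heat_commBound_pow μ hμ (⌈δ⌉₊ + 1)
  refine ⟨2 * (K₀ + K₁), by positivity, fun t r ht hr => ?_⟩
  have hs : 0 < t / r ^ 2 := by positivity
  set s := t / r ^ 2 with hsdef
  rcases le_total s 1 with h | h
  · obtain ⟨σ, hσ, hc⟩ := h₀ t r ht hr
    refine ⟨σ, hσ, hc.mono ?_⟩
    rw [← hsdef, pow_zero, inv_one, mul_one]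
    have h1 : √s ≤ 1 := Real.sqrt_le_one.2 h
    have h2 : 1 ≤ s ^ (-δ) := Real.one_le_rpow_of_pos_of_le_one_of_nonpos hs h (by linarith)
    calc K₀ * r * (1 + √s) ≤ (K₀ + K₁) * r * (2 * s ^ (-δ)) := by
          gcongr
          · linarith
          · linarith
      _ = _ := by ring
  · obtain ⟨σ, hσ, hc⟩ := h₁ t r ht hr
    refine ⟨σ, hσ, hc.mono ?_⟩
    rw [← hsdef]
    have h1 : √s ≤ s := Real.sqrt_le_iff.2 ⟨hs.le, by nlinarith⟩
    have h2 : (s ^ (⌈δ⌉₊ + 1))⁻¹ * (1 + √s) ≤ 2 * s ^ (-δ) := by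
      calc (s ^ (⌈δ⌉₊ + 1))⁻¹ * (1 + √s) ≤ (s ^ (⌈δ⌉₊ + 1))⁻¹ * (2 * s) := by
            gcongr
            linarith
        _ = 2 * s ^ (-(⌈δ⌉₊ : ℝ)) := by
            rw [Real.rpow_neg hs.le, Real.rpow_natCast, pow_succ]
            field_simp
        _ ≤ _ := by
            gcongr
            exact Nat.le_ceil δ
    calc _ = K₁ * r * ((s ^ (⌈δ⌉₊ + 1))⁻¹ * (1 + √s)) := by ring
      _ ≤ (K₀ + K₁) * r * (2 * s ^ (-δ)) := by
          gcongr
          linarith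
      _ = _ := by ring

end TrigPoly

/-! ### Littlewood–Paley blocks -/

namespace TrigPoly

lemma coeff_mul_eq_sum (f g : TrigPoly) (k : Fin 3 → ℤ) (s : Finset (Fin 3 → ℤ))
    (hs : ∀ l, f.coeff l ≠ 0 → g.coeff (k - l) ≠ 0 → l ∈ s) :
    (f * g).coeff k = ∑ l ∈ s, f.coeff l * g.coeff (k - l) := by
  classical
  have h1 : (f * g).coeff k = ∑ l ∈ f.coeff.support, f.coeff l * g.coeff (k - l) := by
    rw [AddMonoidAlgebra.coeff_mul, Finsupp.sum]
    refine Finset.sum_congr rfl fun l _ => ?_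
    simp only [← eq_sub_iff_add_eq']
    simp [Finsupp.sum]
    intro h
    exact Or.inr h
  have h2 : ∀ u v : Finset (Fin 3 → ℤ), (∀ l, f.coeff l ≠ 0 → g.coeff (k - l) ≠ 0 → l ∈ v) →
      ∑ l ∈ u ∪ v, f.coeff l * g.coeff (k - l) = ∑ l ∈ v, f.coeff l * g.coeff (k - l) := by
    intro u v hv
    refine (Finset.sum_subset Finset.subset_union_right fun l _ hl => ?_).symm
    by_contra h
    exact hl (hv l (left_ne_zero_of_mul h) (right_ne_zero_of_mul h))
  rw [h1, ← h2 f.coeff.support s hs, Finset.union_comm,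
    h2 s f.coeff.support fun l hl _ => Finsupp.mem_support_iff.2 hl]

lemma exists_of_coeff_mul_ne_zero {f g : TrigPoly} {k : Fin 3 → ℤ} (h : (f * g).coeff k ≠ 0) :
    ∃ l, f.coeff l ≠ 0 ∧ g.coeff (k - l) ≠ 0 := by
  by_contra! hc
  refine h ?_
  rw [coeff_mul_eq_sum f g k ∅ fun l hl hl' => absurd (hc l hl) hl', Finset.sum_empty]

lemma finite_norm_latE_lt (R : ℝ) : {k : Fin 3 → ℤ | ‖latE k‖ < R}.Finite := by
  refine (Set.finite_Icc (fun _ : Fin 3 => -⌈R⌉) (fun _ => ⌈R⌉)).subset fun k hk => ?_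
  have h : ∀ i, |(k i : ℝ)| ≤ ⌈R⌉ := fun i =>
    (PiLp.norm_apply_le (latE k) i).trans (hk.le.trans (Int.le_ceil R))
  have h' : ∀ i, |k i| ≤ ⌈R⌉ := fun i => by exact_mod_cast h i
  exact ⟨fun i => (abs_le.1 (h' i)).1, fun i => (abs_le.1 (h' i)).2⟩

lemma latE_sub (k l : Fin 3 → ℤ) : latE (k - l) = latE k - latE l := by
  ext i
  simp [latE, latR]

lemma enorm3_eq_norm (x : Fin 3 → ℝ) : 
    enorm3 x = ‖(WithLp.toLp 2 x : EuclideanSpace ℝ (Fin 3))‖ := by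
  simp [enorm3, EuclideanSpace.norm_eq]

section Block

variable {ρ : ℤ → (Fin 3 → ℝ) → ℝ}

lemma neg_one_le_of_rho_ne_zero (hρ : IsDyadicPartition ρ) {m : ℤ} {x : Fin 3 → ℝ}
    (h : ρ m x ≠ 0) : -1 ≤ m := by
  obtain ⟨-, -, -, h0, -⟩ := hρ
  by_contra hm
  exact h (by rw [h0 m (not_le.1 hm)]; rfl)

lemma norm_mem_of_rho_ne_zero (hρ : IsDyadicPartition ρ) {m : ℤ} (hm : 0 ≤ m)
    {k : Fin 3 → ℤ} (h : ρ m (latR k) ≠ 0) :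
    3 / 4 * (2 : ℝ) ^ m ≤ ‖latE k‖ ∧ ‖latE k‖ < 8 / 3 * (2 : ℝ) ^ m := by
  obtain ⟨-, -, -, -, -, h5, h6, -⟩ := hρ
  rw [h6 m hm] at h
  have h' := h5 h
  have hp : (0 : ℝ) < 2 ^ m := by positivity
  rw [Set.mem_ofPred_eq, enorm3_eq_norm, WithLp.toLp_smul, norm_smul, zpow_neg,
    Real.norm_of_nonneg (by positivity), ← div_eq_inv_mul, le_div_iff₀ hp, div_lt_iff₀ hp] at h'
  exact h'

lemma norm_lt_of_rho_ne_zero (hρ : IsDyadicPartition ρ) {m : ℤ} {k : Fin 3 → ℤ}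
    (h : ρ m (latR k) ≠ 0) :
    ‖latE k‖ < 8 / 3 * (2 : ℝ) ^ m := by
  have hm := neg_one_le_of_rho_ne_zero hρ h
  rcases hm.eq_or_lt with rfl | hm
  · obtain ⟨-, -, -, -, h4, -⟩ := hρ
    have h' := h4 h
    rw [Set.mem_ofPred_eq, enorm3_eq_norm] at h'
    refine lt_of_lt_of_eq h' ?_
    norm_num
  · exact (norm_mem_of_rho_ne_zero hρ (by omega) h).2

/-- The Littlewood–Paley block as a trigonometric polynomial. -/
def block (hρ : IsDyadicPartition ρ) (m : ℤ) (c : (Fin 3 → ℤ) → ℂ) : TrigPoly :=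
  AddMonoidAlgebra.ofCoeff
    (Finsupp.ofSupportFinite (fun k => (ρ m (latR k) : ℂ) * c k)
      ((finite_norm_latE_lt (8 / 3 * (2 : ℝ) ^ m)).subset fun _ hk =>
        norm_lt_of_rho_ne_zero hρ (by exact_mod_cast left_ne_zero_of_mul hk)))

lemma coeff_block (hρ : IsDyadicPartition ρ) (m : ℤ) (c : (Fin 3 → ℤ) → ℂ) (k : Fin 3 → ℤ) :
    (block hρ m c).coeff k = (ρ m (latR k) : ℂ) * c k := rfl

lemma rho_ne_zero_of_coeff_block_ne_zero (hρ : IsDyadicPartition ρ) {m : ℤ}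
    {c : (Fin 3 → ℤ) → ℂ} {k : Fin 3 → ℤ}
    (h : (block hρ m c).coeff k ≠ 0) : ρ m (latR k) ≠ 0 := by
  rw [coeff_block] at h
  exact_mod_cast left_ne_zero_of_mul h

lemma LPblock_eq_ev (hρ : IsDyadicPartition ρ) (m : ℤ) (c : (Fin 3 → ℤ) → ℂ) (x : Fin 3 → ℝ) :
    LPblock ρ m c x = ev x (block hρ m c) := by
  rw [ev_eq_sum, LPblock, tsum_eq_sum (s := (block hρ m c).coeff.support)]
  · rfl
  · intro k hk
    rw [Finsupp.notMem_support_iff, coeff_block] at hk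
    rw [hk, zero_mul]

lemma block_mul (hρ : IsDyadicPartition ρ) (m : ℤ) (σ c : (Fin 3 → ℤ) → ℂ) :
    block hρ m (fun k => σ k * c k) = mulOp σ (block hρ m c) := by
  ext k
  simp only [coeff_mulOp, coeff_block]
  ring

lemma exists_block_mulBound (hρ : IsDyadicPartition ρ) : ∃ M : ℝ, 0 ≤ M ∧ ∀ m : ℤ, -1 ≤ m →
    MulBound (fun k => (ρ m (latR k) : ℂ)) M := by
  have hsch : ∀ m : ℤ, (∃ R : ℝ, ∀ x, ρ m x ≠ 0 → enorm3 x ≤ R) →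
      ∃ Φ : SchwartzMap (EuclideanSpace ℝ (Fin 3)) ℂ, ∀ x, Φ x = (ρ m x.ofLp : ℂ) := by
    rintro m ⟨R, hR⟩
    let f : EuclideanSpace ℝ (Fin 3) → ℂ := fun x => (ρ m x.ofLp : ℂ)
    have hf : ContDiff ℝ (⊤ : ℕ∞) f :=
      Complex.ofRealCLM.contDiff.comp ((hρ.1 m).comp
        (EuclideanSpace.equiv (Fin 3) ℝ).toContinuousLinearMap.contDiff)
    have hs : HasCompactSupport f := by
      refine HasCompactSupport.of_support_subset_isCompact
        (isCompact_closedBall (0 : EuclideanSpace ℝ (Fin 3)) R) fun x hx => ?_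
      have hx' : ρ m x.ofLp ≠ 0 := by simpa [f] using hx
      simpa [enorm3_eq_norm] using hR _ hx'
    exact ⟨hs.toSchwartzMap hf, fun x => rfl⟩
  obtain ⟨-, -, -, -, h4, h5, h6, -⟩ := hρ
  obtain ⟨Φ, hΦ⟩ := hsch (-1) ⟨4 / 3, fun x hx => (h4 hx).le⟩
  obtain ⟨Ψ, hΨ⟩ := hsch 0 ⟨8 / 3, fun x hx => (h5 hx).2.le⟩
  have hM1 : 0 ≤ ∫ x, ‖(FourierTransform.fourier Φ) x‖ :=
    MeasureTheory.integral_nonneg fun _ => norm_nonneg _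
  have hM2 : 0 ≤ ∫ x, ‖(FourierTransform.fourier Ψ) x‖ :=
    MeasureTheory.integral_nonneg fun _ => norm_nonneg _
  refine ⟨_, add_nonneg hM1 hM2, fun m hm h B hB x => ?_⟩
  have hB0 : 0 ≤ B := (norm_nonneg _).trans (hB 0)
  rcases hm.eq_or_lt with rfl | hm
  · have e : (fun k => (ρ (-1) (latR k) : ℂ)) = fun k => Φ ((1 : ℝ) • latE k) := by
      funext k
      rw [hΦ, one_smul]
      rfl
    rw [e]
    refine (mulBound_schwartz Φ 1 h B hB x).trans ?_
    gcongr
    linarith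
  · have e : (fun k => (ρ m (latR k) : ℂ)) = fun k => Ψ (((2 : ℝ) ^ (-m)) • latE k) := by
      funext k
      rw [hΨ, h6 m (by omega)]
      rfl
    rw [e]
    refine (mulBound_schwartz Ψ _ h B hB x).trans ?_
    gcongr
    linarith

/-- A product of a low frequency block and a high frequency block is localized in an annulus. -/
lemma norm_mem_annulus (hρ : IsDyadicPartition ρ) {j n : ℤ} (hjn : j + 2 ≤ n) {k l : Fin 3 → ℤ}
    (hl : ρ j (latR l) ≠ 0) (hkl : ρ n (latR (k - l)) ≠ 0) :
    1 / 12 * (2 : ℝ) ^ n ≤ ‖latE k‖ ∧ ‖latE k‖ < 4 * (2 : ℝ) ^ n := by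
  have hj := neg_one_le_of_rho_ne_zero hρ hl
  have h1 := norm_lt_of_rho_ne_zero hρ hl
  obtain ⟨h2, h3⟩ := norm_mem_of_rho_ne_zero hρ (by omega) hkl
  rw [latE_sub] at h2 h3
  have h4 : (2 : ℝ) ^ j ≤ 2 ^ n / 4 := by
    have : (2 : ℝ) ^ j ≤ 2 ^ (n - 2) := zpow_le_zpow_right₀ (by norm_num) (by omega)
    refine this.trans_eq ?_
    rw [zpow_sub₀ (by norm_num)]
    norm_num
  have h5 := norm_sub_le (latE k) (latE l)
  have h6 := norm_sub_norm_le (latE k) (latE l)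
  have hp : (0 : ℝ) < 2 ^ n := by positivity
  constructor <;> linarith

lemma index_mem (hρ : IsDyadicPartition ρ) {m j n : ℤ} (hjn : j + 2 ≤ n) {k l : Fin 3 → ℤ}
    (hk : ρ m (latR k) ≠ 0) (hl : ρ j (latR l) ≠ 0) (hkl : ρ n (latR (k - l)) ≠ 0) :
    j ∈ Finset.Icc (-1) (m + 3) ∧ n ∈ Finset.Icc (m - 5) (m + 5) := by
  have hj := neg_one_le_of_rho_ne_zero hρ hl
  have hm := neg_one_le_of_rho_ne_zero hρ hk
  obtain ⟨h1, h2⟩ := norm_mem_annulus hρ hjn hl hkl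
  have h3 := norm_lt_of_rho_ne_zero hρ hk
  have hlt : n < m + 5 := by
    refine (zpow_lt_zpow_iff_right₀ (one_lt_two (α := ℝ))).1 ?_
    rw [zpow_add₀ (by norm_num)]
    norm_num
    linarith
  have hge : m - 5 ≤ n := by
    rcases hm.eq_or_lt with rfl | hm
    · omega
    · have h4 := (norm_mem_of_rho_ne_zero hρ (by omega) hk).1
      refine (zpow_le_zpow_iff_right₀ (one_lt_two (α := ℝ))).1 ?_
      rw [zpow_sub₀ (by norm_num)]
      have hp : (0 : ℝ) < 2 ^ n := by positivity
      norm_num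
      linarith
  simp only [Finset.mem_Icc]
  omega

lemma paraCoeff_eq_sum (hρ : IsDyadicPartition ρ) (c d : (Fin 3 → ℤ) → ℂ) {m : ℤ} {k : Fin 3 → ℤ}
    (hk : ρ m (latR k) ≠ 0) :
    paraCoeff ρ c d k = ∑ n ∈ Finset.Icc (m - 5) (m + 5), ∑ j ∈ Finset.Icc (-1) (m + 3),
      if j + 2 ≤ n then (block hρ j c * block hρ n d).coeff k else 0 := by
  set S := (finite_norm_latE_lt (8 / 3 * (2 : ℝ) ^ (m + 3))).toFinset with hS
  have hmemS : ∀ j ∈ Finset.Icc (-1) (m + 3), ∀ l, ρ j (latR l) ≠ 0 → l ∈ S := by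
    intro j hj l hl
    rw [hS, Set.Finite.mem_toFinset, Set.mem_ofPred_eq]
    refine (norm_lt_of_rho_ne_zero hρ hl).trans_le ?_
    gcongr
    · norm_num
    · exact (Finset.mem_Icc.1 hj).2
  rw [paraCoeff, tsum_eq_sum (s := Finset.Icc (-1) (m + 3) ×ˢ Finset.Icc (m - 5) (m + 5) ×ˢ S)]
  · simp only [Finset.sum_product]
    rw [Finset.sum_comm]
    refine Finset.sum_congr rfl fun n _ => Finset.sum_congr rfl fun j hj => ?_
    by_cases hjn : j + 2 ≤ n
    · rw [if_pos hjn, coeff_mul_eq_sum _ _ k S fun l hl _ =>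
        hmemS j hj l (rho_ne_zero_of_coeff_block_ne_zero hρ hl)]
      refine Finset.sum_congr rfl fun l _ => ?_
      rw [if_pos ⟨(Finset.mem_Icc.1 hj).1, hjn⟩, coeff_block, coeff_block]
      ring
    · rw [if_neg hjn]
      exact Finset.sum_eq_zero fun l _ => if_neg fun h => hjn h.2
  · rintro ⟨j, n, l⟩ hp
    dsimp only
    split_ifs with hc
    · by_contra hne
      have h1 := left_ne_zero_of_mul hne
      have hkl : ρ n (latR (k - l)) ≠ 0 := by exact_mod_cast right_ne_zero_of_mul h1
      have hl : ρ j (latR l) ≠ 0 := by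
        exact_mod_cast left_ne_zero_of_mul (left_ne_zero_of_mul h1)
      obtain ⟨hj, hn⟩ := index_mem hρ hc.2 hk hl hkl
      exact hp (Finset.mem_product.2 ⟨hj, Finset.mem_product.2 ⟨hn, hmemS j hj l hl⟩⟩)
    · rfl

end Block

end TrigPoly

/-! ### The commutator estimate -/

namespace TrigPoly

section Commutator

variable {ρ : ℤ → (Fin 3 → ℝ) → ℝ}

lemma block_commutator_eq_sum (hρ : IsDyadicPartition ρ) (σ c d : (Fin 3 → ℤ) → ℂ) (m : ℤ) :
    block hρ m (fun k => σ k * paraCoeff ρ c d k - paraCoeff ρ c (fun k' => σ k' * d k') k) =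
      ∑ n ∈ Finset.Icc (m - 5) (m + 5), ∑ j ∈ Finset.Icc (-1) (m + 3),
        if j + 2 ≤ n then mulOp (fun k => (ρ m (latR k) : ℂ))
          (mulOp σ (block hρ j c * block hρ n d) - block hρ j c * mulOp σ (block hρ n d))
        else 0 := by
  ext k
  have hsum : ∀ (s : Finset ℤ) (F : ℤ → TrigPoly), (∑ n ∈ s, F n).coeff k =
      ∑ n ∈ s, (F n).coeff k := fun s F => by
    classical
    induction s using Finset.induction_on with
    | empty => simp
    | insert a s ha ih => rw [Finset.sum_insert ha, Finset.sum_insert ha, ← ih]; rfl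
  simp only [hsum, apply_ite (fun F : TrigPoly => F.coeff k), coeff_mulOp, coeff_block]
  by_cases hk : ρ m (latR k) = 0
  · simp [hk]
  · rw [paraCoeff_eq_sum hρ c d hk, paraCoeff_eq_sum hρ c _ hk, Finset.mul_sum,
      ← Finset.sum_sub_distrib, Finset.mul_sum]
    refine Finset.sum_congr rfl fun n _ => ?_
    rw [Finset.mul_sum, ← Finset.sum_sub_distrib, Finset.mul_sum]
    refine Finset.sum_congr rfl fun j _ => ?_
    split_ifs with hjn
    · rw [block_mul, AddMonoidAlgebra.coeff_sub, Finsupp.sub_apply, coeff_mulOp]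
    · simp

lemma norm_smul_latE (s : ℝ) (k : Fin 3 → ℤ) :
    ‖(2 : ℝ) ^ (-s) • latE k‖ = ‖latE k‖ / 2 ^ s := by
  rw [norm_smul, Real.norm_of_nonneg (by positivity), Real.rpow_neg (by norm_num),
    div_eq_inv_mul]

lemma exists_term_bound (hρ : IsDyadicPartition ρ) (μ : ℝ) (hμ : 0 < μ) (α β δ : ℝ)
    (hδ : 0 ≤ δ) :
    ∃ A : ℝ, 0 ≤ A ∧ ∀ t : ℝ, 0 < t → ∀ m j n : ℤ, -1 ≤ m → -1 ≤ j → j + 2 ≤ n →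
      ∀ (c d : (Fin 3 → ℤ) → ℂ) (U V : ℝ),
      (∀ x, ‖ev x (block hρ j c)‖ ≤ U * 2 ^ (-(j * α))) →
      (∀ x, ‖ev x (block hρ n d)‖ ≤ V * 2 ^ (-(n * β))) →
      ∀ x, ‖ev x (mulOp (fun k => (ρ m (latR k) : ℂ))
          (mulOp (heatMul μ t) (block hρ j c * block hρ n d) -
            block hρ j c * mulOp (heatMul μ t) (block hρ n d)))‖ ≤
        A * t ^ (-δ) * U * V * (2 ^ (-(n * (α + β + 2 * δ))) * 2 ^ ((j - n) * (1 - α))) := by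
  obtain ⟨M, hM, hMb⟩ := exists_block_mulBound hρ
  obtain ⟨K, hK, hKb⟩ := exists_heat_commBound μ hμ δ hδ
  obtain ⟨L, hL, hLb⟩ := exists_bernstein
  refine ⟨M * K * L, by positivity, fun t ht m j n hm hj hjn c d U V hU hV x => ?_⟩
  obtain ⟨σ, hσ, hcomm⟩ := hKb t (2 ^ (-(n : ℝ))) ht (by positivity)
  have hp : ∀ i : ℤ, (0 : ℝ) < 2 ^ i := fun i => by positivity
  have hlip := hLb (block hρ j c) _ (2 ^ (-(j : ℝ))) (by positivity) (fun k hk => by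
    have h := norm_lt_of_rho_ne_zero hρ (rho_ne_zero_of_coeff_block_ne_zero hρ hk)
    rw [norm_smul_latE, Real.rpow_intCast, div_le_iff₀ (hp j)]
    linarith [hp j]) hU
  have e1 : mulOp (heatMul μ t) (block hρ j c * block hρ n d) =
      mulOp σ (block hρ j c * block hρ n d) := mulOp_congr fun k hk => by
    obtain ⟨l, hl, hkl⟩ := exists_of_coeff_mul_ne_zero hk
    have h := norm_mem_annulus hρ hjn (rho_ne_zero_of_coeff_block_ne_zero hρ hl)
      (rho_ne_zero_of_coeff_block_ne_zero hρ hkl)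
    refine hσ k ?_ ?_ <;> rw [norm_smul_latE, Real.rpow_intCast]
    · exact (le_div_iff₀ (hp n)).2 h.1
    · exact (div_le_iff₀ (hp n)).2 h.2.le
  have e2 : mulOp (heatMul μ t) (block hρ n d) = mulOp σ (block hρ n d) :=
    mulOp_congr fun k hk => by
      have h := norm_mem_of_rho_ne_zero hρ (by omega)
        (rho_ne_zero_of_coeff_block_ne_zero hρ hk)
      refine hσ k ?_ ?_ <;> rw [norm_smul_latE, Real.rpow_intCast]
      · refine (le_div_iff₀ (hp n)).2 ?_
        linarith [hp n]
      · refine (div_le_iff₀ (hp n)).2 ?_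
        linarith [hp n]
  rw [e1, e2]
  refine (hMb m hm _ _ (hcomm _ _ _ _ hlip hV) x).trans_eq ?_
  have e3 : (t / ((2 : ℝ) ^ (-(n : ℝ))) ^ 2) ^ (-δ) = t ^ (-δ) * 2 ^ (-(2 * n * δ)) := by
    rw [← Real.rpow_natCast, ← Real.rpow_mul (by norm_num), div_eq_mul_inv,
      ← Real.rpow_neg (by norm_num), Real.mul_rpow ht.le (by positivity),
      ← Real.rpow_mul (by norm_num)]
    congr 2
    push_cast
    ring
  have e4 : (2 : ℝ) ^ (-(n : ℝ)) * 2 ^ (-(2 * n * δ)) * 2 ^ (j : ℝ) * 2 ^ (-(j * α)) *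
      2 ^ (-(n * β)) = 2 ^ (-(n * (α + β + 2 * δ))) * 2 ^ ((j - n) * (1 - α)) := by
    simp only [← Real.rpow_add (zero_lt_two (α := ℝ))]
    congr 1
    ring
  rw [e3, ← e4, Real.rpow_neg (y := (j : ℝ)) (by norm_num), inv_inv]
  ring

lemma sum_geometric_le {κ : ℝ} (hκ : 0 < κ) (s : Finset ℤ) (n : ℤ) :
    ∑ j ∈ s, (if j + 2 ≤ n then (2 : ℝ) ^ ((j - n) * κ) else 0) ≤ (1 - 2 ^ (-κ))⁻¹ := by
  have h0 : (0 : ℝ) ≤ 2 ^ (-κ) := by positivity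
  have h1 : (2 : ℝ) ^ (-κ) < 1 := Real.rpow_lt_one_of_one_lt_of_neg (by norm_num) (by linarith)
  rw [← Finset.sum_filter]
  have hinj : Set.InjOn (fun j : ℤ => (n - j).toNat) (s.filter fun j => j + 2 ≤ n) := by
    intro i hi j hj hij
    simp only [Finset.coe_filter, Set.mem_ofPred_eq] at hi hj
    simp only at hij
    omega
  calc ∑ j ∈ s with j + 2 ≤ n, (2 : ℝ) ^ ((j - n) * κ)
      = ∑ j ∈ s with j + 2 ≤ n, ((2 : ℝ) ^ (-κ)) ^ (n - j).toNat := by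
        refine Finset.sum_congr rfl fun j hj => ?_
        have hj' : (((n - j).toNat : ℤ) : ℝ) = ((n - j : ℤ) : ℝ) := by
          rw [Int.toNat_of_nonneg]
          have := (Finset.mem_filter.1 hj).2
          omega
        rw [← Real.rpow_natCast, ← Real.rpow_mul (by norm_num)]
        congr 1
        push_cast at hj'
        rw [hj']
        ring
    _ = ∑ i ∈ (s.filter fun j => j + 2 ≤ n).image fun j : ℤ => (n - j).toNat,
          ((2 : ℝ) ^ (-κ)) ^ i := (Finset.sum_image hinj).symm
    _ ≤ ∑' i : ℕ, ((2 : ℝ) ^ (-κ)) ^ i :=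
        (summable_geometric_of_lt_one h0 h1).sum_le_tsum _ fun i _ => by positivity
    _ = (1 - 2 ^ (-κ))⁻¹ := tsum_geometric_of_lt_one h0 h1

lemma exists_commutator_bound (hρ : IsDyadicPartition ρ) (μ : ℝ) (hμ : 0 < μ) (α β δ : ℝ)
    (hα : α < 1) (hδ : 0 ≤ δ) :
    ∃ A : ℝ, 0 ≤ A ∧ ∀ t : ℝ, 0 < t → ∀ m : ℤ, -1 ≤ m →
      ∀ (c d : (Fin 3 → ℤ) → ℂ) (U V : ℝ), 0 ≤ U → 0 ≤ V →
      (∀ j ∈ Finset.Icc (-1) (m + 3), ∀ x, ‖ev x (block hρ j c)‖ ≤ U * 2 ^ (-(j * α))) →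
      (∀ n ∈ Finset.Icc 1 (m + 5), ∀ x, ‖ev x (block hρ n d)‖ ≤ V * 2 ^ (-(n * β))) →
      ∀ x, ‖ev x (block hρ m (fun k => heatMul μ t k * paraCoeff ρ c d k -
          paraCoeff ρ c (fun k' => heatMul μ t k' * d k') k))‖ ≤
        A * t ^ (-δ) * U * V * 2 ^ (-(m * (α + β + 2 * δ))) := by
  obtain ⟨A, hA, hAb⟩ := exists_term_bound hρ μ hμ α β δ hδ
  set ω := α + β + 2 * δ with hω
  set Γ : ℝ := (1 - 2 ^ (-(1 - α)))⁻¹ with hΓ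
  have hΓ0 : 0 ≤ Γ := by
    have h1 : (2 : ℝ) ^ (-(1 - α)) < 1 :=
      Real.rpow_lt_one_of_one_lt_of_neg (by norm_num) (by linarith)
    exact inv_nonneg.2 (by linarith)
  refine ⟨A * (11 * (2 ^ (5 * |ω|) * Γ)), by positivity,
    fun t ht m hm c d U V hU hV hUb hVb x => ?_⟩
  rw [block_commutator_eq_sum, map_sum]
  have hterm : ∀ n ∈ Finset.Icc (m - 5) (m + 5),
      ‖ev x (∑ j ∈ Finset.Icc (-1) (m + 3),
        if j + 2 ≤ n then mulOp (fun k => (ρ m (latR k) : ℂ))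
          (mulOp (heatMul μ t) (block hρ j c * block hρ n d) -
            block hρ j c * mulOp (heatMul μ t) (block hρ n d))
        else 0)‖ ≤ A * t ^ (-δ) * U * V * (2 ^ (5 * |ω|) * 2 ^ (-(m * ω)) * Γ) := by
    intro n hn
    rw [Finset.mem_Icc] at hn
    rw [map_sum]
    have hn' : (2 : ℝ) ^ (-(n * ω)) ≤ 2 ^ (5 * |ω|) * 2 ^ (-(m * ω)) := by
      rw [← Real.rpow_add (by norm_num)]
      refine Real.rpow_le_rpow_of_exponent_le (by norm_num) ?_
      have h1 : |((m : ℝ) - n)| ≤ 5 := by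
        have h : |m - n| ≤ 5 := abs_le.2 ⟨by omega, by omega⟩
        exact_mod_cast h
      have h2 : ((m : ℝ) - n) * ω ≤ 5 * |ω| :=
        (le_abs_self _).trans (by rw [abs_mul]; gcongr)
      linarith
    calc _ ≤ ∑ j ∈ Finset.Icc (-1) (m + 3), A * t ^ (-δ) * U * V * (2 ^ (-(n * ω)) *
          if j + 2 ≤ n then (2 : ℝ) ^ ((j - n) * (1 - α)) else 0) := by
          refine (norm_sum_le _ _).trans (Finset.sum_le_sum fun j hj => ?_)
          have hj' := Finset.mem_Icc.1 hj
          split_ifs with hjn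
          · exact hAb t ht m j n hm hj'.1 hjn c d U V (hUb j hj)
              (hVb n (Finset.mem_Icc.2 ⟨by omega, hn.2⟩)) x
          · simp
      _ ≤ _ := by
          rw [← Finset.mul_sum, ← Finset.mul_sum]
          gcongr
          exact sum_geometric_le (by linarith) _ n
  refine (norm_sum_le _ _).trans ((Finset.sum_le_card_nsmul _ _ _ hterm).trans_eq ?_)
  have hcard : (Finset.Icc (m - 5) (m + 5)).card = 11 := by
    rw [Int.card_Icc]
    omega
  rw [hcard, nsmul_eq_mul]
  push_cast
  ring

lemma norm_ev_block_le {a : ℝ} {c : (Fin 3 → ℤ) → ℂ} (hρ : IsDyadicPartition ρ)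
    (hc : besovNorm ρ a c ≠ ⊤) {m : ℤ} (hm : -1 ≤ m) (x : Fin 3 → ℝ) :
    ‖ev x (block hρ m c)‖ ≤ (besovNorm ρ a c).toReal * 2 ^ (-(m * a)) := by
  have h : ENNReal.ofReal ((2 : ℝ) ^ ((m : ℝ) * a)) * ‖LPblock ρ m c x‖₊ ≤ besovNorm ρ a c := by
    refine le_trans ?_ (le_iSup _ m)
    rw [if_pos hm]
    gcongr
    exact le_iSup (fun x => (‖LPblock ρ m c x‖₊ : ℝ≥0∞)) x
  have h' := ENNReal.toReal_mono hc h
  rw [ENNReal.toReal_mul, ENNReal.toReal_ofReal (by positivity), ENNReal.coe_toReal, coe_nnnorm,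
    LPblock_eq_ev hρ] at h'
  rw [Real.rpow_neg (by norm_num), ← div_eq_mul_inv, le_div_iff₀ (by positivity), mul_comm]
  exact h'

lemma besovNorm_le_ofReal {a B : ℝ} {c : (Fin 3 → ℤ) → ℂ} (hρ : IsDyadicPartition ρ)
    (h : ∀ m : ℤ, -1 ≤ m → ∀ x, ‖ev x (block hρ m c)‖ ≤ B * 2 ^ (-(m * a))) :
    besovNorm ρ a c ≤ ENNReal.ofReal B := by
  refine iSup_le fun m => ?_
  split_ifs with hm
  · rw [supNormE, ENNReal.mul_iSup]
    refine iSup_le fun x => ?_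
    rw [← ENNReal.ofReal_coe_nnreal, ← ENNReal.ofReal_mul (by positivity), coe_nnnorm,
      LPblock_eq_ev hρ]
    refine ENNReal.ofReal_le_ofReal ?_
    have h' := h m hm x
    rwa [Real.rpow_neg (by norm_num), ← div_eq_mul_inv, le_div_iff₀ (by positivity),
      mul_comm] at h'
  · exact zero_le

lemma exists_norm_ev_block_le (hρ : IsDyadicPartition ρ) (a : ℝ) (c : (Fin 3 → ℤ) → ℂ)
    (s : Finset ℤ) :
    ∃ V : ℝ, 0 ≤ V ∧ ∀ n ∈ s, ∀ x, ‖ev x (block hρ n c)‖ ≤ V * 2 ^ (-(n * a)) := by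
  let F : ℤ → ℝ := fun n =>
    (∑ k ∈ (block hρ n c).coeff.support, ‖(block hρ n c).coeff k‖) * 2 ^ (n * a)
  have hF : ∀ n, 0 ≤ F n := fun n => by positivity
  refine ⟨∑ n ∈ s, F n, Finset.sum_nonneg fun n _ => hF n, fun n hn x => ?_⟩
  rw [Real.rpow_neg (by norm_num), ← div_eq_mul_inv, le_div_iff₀ (by positivity)]
  refine le_trans ?_ (Finset.single_le_sum (fun n _ => hF n) hn)
  exact mul_le_mul_of_nonneg_right (norm_ev_le x _) (by positivity)

end Commutator

end TrigPoly

/-- commutation between paraproduct and heat semigroup: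
`‖P_t(u ≺ v) − u ≺ (P_t v)‖_{C^{α+β+2δ}} ≲ t^{-δ} ‖u‖_{C^α}‖v‖_{C^β}` uniformly in `t > 0`,
for `α < 1`, `β ∈ ℝ`, `δ ≥ 0`. -/
theorem statement12 (ρ : ℤ → (Fin 3 → ℝ) → ℝ) (hρ : IsDyadicPartition ρ)
    (μ : ℝ) (hμ : 0 < μ) (α β δ : ℝ) (hα : α < 1) (hδ : 0 ≤ δ) :
    ∃ C : ℝ, 0 < C ∧ ∀ t : ℝ, 0 < t → ∀ c d : (Fin 3 → ℤ) → ℂ,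
      besovNorm ρ (α + β + 2 * δ)
          (fun k => heatMul μ t k * paraCoeff ρ c d k -
            paraCoeff ρ c (fun k' => heatMul μ t k' * d k') k) ≤
        ENNReal.ofReal (C * t ^ (-δ)) * besovNorm ρ α c * besovNorm ρ β d := by
  obtain ⟨A, hA, hAb⟩ := TrigPoly.exists_commutator_bound hρ μ hμ α β δ hα hδ
  refine ⟨A + 1, by positivity, fun t ht c d => ?_⟩
  have hcoef : 0 < (A + 1) * t ^ (-δ) := by positivity
  by_cases hc0 : besovNorm ρ α c = 0
  · rw [hc0, mul_zero, zero_mul, ← ENNReal.ofReal_zero]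
    refine TrigPoly.besovNorm_le_ofReal hρ fun m hm x => ?_
    obtain ⟨V, hV, hVb⟩ :=
      TrigPoly.exists_norm_ev_block_le hρ β d (Finset.Icc 1 (m + 5))
    refine (hAb t ht m hm c d 0 V le_rfl hV (fun j hj x => ?_) hVb x).trans_eq (by ring)
    simpa [hc0] using TrigPoly.norm_ev_block_le hρ (a := α) (c := c) (by simp [hc0])
      (Finset.mem_Icc.1 hj).1 x
  by_cases hd0 : besovNorm ρ β d = 0
  · rw [hd0, mul_zero, ← ENNReal.ofReal_zero]
    refine TrigPoly.besovNorm_le_ofReal hρ fun m hm x => ?_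
    obtain ⟨U, hU, hUb⟩ :=
      TrigPoly.exists_norm_ev_block_le hρ α c (Finset.Icc (-1) (m + 3))
    refine (hAb t ht m hm c d U 0 hU le_rfl hUb (fun n hn x => ?_) x).trans_eq (by ring)
    have hn' := (Finset.mem_Icc.1 hn).1
    simpa [hd0] using TrigPoly.norm_ev_block_le hρ (a := β) (c := d) (by simp [hd0])
      (m := n) (by omega) x
  by_cases hc : besovNorm ρ α c = ⊤
  · rw [hc, ENNReal.mul_top (ENNReal.ofReal_pos.2 hcoef).ne', ENNReal.top_mul hd0]
    exact le_top
  by_cases hd : besovNorm ρ β d = ⊤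
  · rw [hd, ENNReal.mul_top (mul_ne_zero (ENNReal.ofReal_pos.2 hcoef).ne' hc0)]
    exact le_top
  have hrhs : ENNReal.ofReal ((A + 1) * t ^ (-δ)) * besovNorm ρ α c * besovNorm ρ β d =
      ENNReal.ofReal ((A + 1) * t ^ (-δ) * (besovNorm ρ α c).toReal *
        (besovNorm ρ β d).toReal) := by
    rw [ENNReal.ofReal_mul (mul_nonneg hcoef.le ENNReal.toReal_nonneg),
      ENNReal.ofReal_mul hcoef.le, ENNReal.ofReal_toReal hc, ENNReal.ofReal_toReal hd]
  rw [hrhs]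
  refine TrigPoly.besovNorm_le_ofReal hρ fun m hm x => ?_
  refine (hAb t ht m hm c d _ _ ENNReal.toReal_nonneg ENNReal.toReal_nonneg
    (fun j hj x => TrigPoly.norm_ev_block_le hρ hc (Finset.mem_Icc.1 hj).1 x)
    (fun n hn x => TrigPoly.norm_ev_block_le hρ hd (by
      have := (Finset.mem_Icc.1 hn).1
      omega) x) x).trans ?_
  gcongr
  linarith
end
end
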